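/- arXiv:1112.5677 — 5 statements merged into one kernel-verified Lean document; each statement's English description precedes it below -/
import Mathlib

section
/- Let γ(λ) ≥ 0 be a function with γ(λ) → +∞ as λ → +∞. Then there exists a real-valued, 2π-periodic, nowhere linear function φ of class C¹(𝕋) such that ‖e^{iλφ}‖_{A_1(𝕋)} = O(γ(|λ|) · log|λ|) as |λ| → ∞, λ ∈ ℝ. -/
open MeasureTheory Real Set
open scoped ENNReal

/-- The k-th Fourier coefficient of a (2π-periodic) function on the circle,
identified with a function on [0, 2π]. -/
noncomputable def fourierCoef (f : ℝ → ℂ) (k : ℤ) : ℂ :=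
  (1 / (2 * (Real.pi : ℂ))) *
    ∫ t in (0:ℝ)..(2 * Real.pi), f t * Complex.exp (-Complex.I * (k : ℂ) * (t : ℂ))

/-- The A_p(𝕋) norm: ℓ^p norm of the sequence of Fourier coefficients
(valued in ℝ≥0∞ so that divergence gives ∞). -/
noncomputable def ApNorm (p : ℝ) (f : ℝ → ℂ) : ℝ≥0∞ :=
  (∑' k : ℤ, ((‖fourierCoef f k‖₊ : ℝ≥0∞) ^ p)) ^ (1 / p)

/-- the triangle wave -/
noncomputable def triW (t : ℝ) : ℝ := Real.arccos (Real.cos t)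

lemma triW_continuous : Continuous triW := by unfold triW; fun_prop

lemma triW_nonneg (t : ℝ) : 0 ≤ triW t := Real.arccos_nonneg _
lemma triW_le (t : ℝ) : triW t ≤ π := Real.arccos_le_pi _

lemma triW_of_abs_le {t : ℝ} (h : |t| ≤ π) : triW t = |t| := by
  unfold triW
  rw [← Real.cos_abs]
  exact Real.arccos_cos (abs_nonneg t) h

lemma triW_two_pi (t : ℝ) : triW (t + 2 * π) = triW t := by
  unfold triW; rw [Real.cos_add_two_pi]

lemma triW_pi (t : ℝ) : triW (t + π) = π - triW t := by
  unfold triW; rw [Real.cos_add_pi, Real.arccos_neg]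

lemma triW_eq_norm (t : ℝ) : triW t = ‖(t : AddCircle (2 * π))‖ := by
  have h1 : ‖(t : AddCircle (2 * π))‖ ≤ |2 * π| / 2 :=
    AddCircle.norm_le_half_period _ (by positivity)
  rw [abs_of_pos (by positivity)] at h1
  rw [AddCircle.norm_eq] at h1 ⊢
  unfold triW
  have : Real.cos t = Real.cos |t - ↑(round ((2 * π)⁻¹ * t)) * (2 * π)| := by
    rw [Real.cos_abs, Real.cos_sub_int_mul_two_pi]
  rw [this]
  exact Real.arccos_cos (abs_nonneg _) (by linarith)

lemma triW_lip (x y : ℝ) : |triW x - triW y| ≤ |x - y| := by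
  rw [triW_eq_norm, triW_eq_norm]
  refine (abs_norm_sub_norm_le _ _).trans ?_
  rw [← AddCircle.coe_sub, AddCircle.norm_eq]
  have := round_le ((2 * π)⁻¹ * (x - y)) 0
  have hp : 0 < 2 * π := by positivity
  have h2 := mul_le_mul_of_nonneg_right this hp.le
  rw [← abs_of_pos hp, ← abs_mul, ← abs_mul, abs_of_pos hp] at h2
  have e1 : ((2 * π)⁻¹ * (x - y) - ↑(round ((2 * π)⁻¹ * (x - y)))) * (2 * π)
    = (x - y) - ↑(round ((2 * π)⁻¹ * (x - y))) * (2 * π) := by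
    field_simp
  have e2 : ((2 * π)⁻¹ * (x - y) - ((0 : ℤ) : ℝ)) * (2 * π) = x - y := by
    push_cast; field_simp; ring
  rw [e1, e2] at h2
  exact h2

lemma triW_hasDerivAt {t : ℝ} (h : Real.sin t ≠ 0) :
    HasDerivAt triW (Real.sin t / |Real.sin t|) t := by
  have hs : Real.cos t ^ 2 < 1 := by
    have := Real.sin_sq_add_cos_sq t
    have := sq_pos_of_ne_zero h
    linarith
  have h1 : Real.cos t ≠ -1 := by intro e; rw [e] at hs; norm_num at hs
  have h2 : Real.cos t ≠ 1 := by intro e; rw [e] at hs; norm_num at hs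
  have := (Real.hasDerivAt_arccos h1 h2).comp t (Real.hasDerivAt_cos t)
  have e : Real.sin t / |Real.sin t| = -(1 / √(1 - Real.cos t ^ 2)) * -Real.sin t := by
    rw [Real.abs_sin_eq_sqrt_one_sub_cos_sq]
    ring
  rw [e]
  exact this

section genPhi
variable {Ω : Type*} [MeasurableSpace Ω]

/-- superposition of triangle waves -/
noncomputable def genPhi (μ : Measure Ω) (T : Ω → ℝ) (x : ℝ) : ℝ := ∫ ω, triW (x - T ω) ∂μ

lemma triW_meas {T : Ω → ℝ} (hT : Measurable T) (x : ℝ) : Measurable fun ω => triW (x - T ω) :=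
  triW_continuous.measurable.comp (measurable_const.sub hT)

lemma triW_int (μ : Measure Ω) [IsFiniteMeasure μ] {T : Ω → ℝ} (hT : Measurable T) (x : ℝ) :
    Integrable (fun ω => triW (x - T ω)) μ := by
  refine Integrable.of_bound (triW_meas hT x).aestronglyMeasurable π (ae_of_all _ fun ω => ?_)
  rw [Real.norm_eq_abs, abs_of_nonneg (triW_nonneg _)]
  exact triW_le _

lemma genPhi_two_pi (μ : Measure Ω) (T : Ω → ℝ) (x : ℝ) :
    genPhi μ T (x + 2 * π) = genPhi μ T x := by
  unfold genPhi
  congr 1; ext ω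
  rw [← triW_two_pi (x - T ω)]; congr 1; ring

lemma genPhi_pi (μ : Measure Ω) [IsFiniteMeasure μ] {T : Ω → ℝ} (hT : Measurable T) (x : ℝ) :
    genPhi μ T (x + π) = μ.real univ * π - genPhi μ T x := by
  unfold genPhi
  have : (fun ω => triW (x + π - T ω)) = fun ω => π - triW (x - T ω) := by
    ext ω
    rw [← triW_pi (x - T ω)]; congr 1; ring
  rw [this, integral_sub (integrable_const _) (triW_int μ hT x)]
  simp

lemma genPhi_lip (μ : Measure Ω) [IsFiniteMeasure μ] {T : Ω → ℝ} (hT : Measurable T) (x y : ℝ) :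
    |genPhi μ T x - genPhi μ T y| ≤ μ.real univ * |x - y| := by
  unfold genPhi
  rw [← integral_sub (triW_int μ hT x) (triW_int μ hT y)]
  rw [← Real.norm_eq_abs]
  refine (norm_integral_le_of_norm_le_const (C := |x - y|) (ae_of_all _ fun ω => ?_)).trans ?_
  · rw [Real.norm_eq_abs]
    refine (triW_lip _ _).trans (le_of_eq ?_)
    congr 1; ring
  · rw [mul_comm]

lemma genPhi_continuous (μ : Measure Ω) [IsFiniteMeasure μ] {T : Ω → ℝ} (hT : Measurable T) :
    Continuous (genPhi μ T) := by
  have : LipschitzWith (Real.toNNReal (μ.real univ)) (genPhi μ T) := by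
    refine LipschitzWith.of_dist_le_mul fun x y => ?_
    rw [Real.dist_eq, Real.dist_eq, Real.coe_toNNReal _ measureReal_nonneg]
    exact genPhi_lip μ hT x y
  exact this.continuous

lemma genPhi_contDiff (μ : Measure Ω) [IsFiniteMeasure μ] {T : Ω → ℝ} (hT : Measurable T)
    (hna : ∀ a, μ {ω | T ω = a} = 0) : ContDiff ℝ 1 (genPhi μ T) := by
  have hsin : ∀ x, ∀ᵐ ω ∂μ, Real.sin (x - T ω) ≠ 0 := by
    intro x
    rw [ae_iff]
    refine measure_mono_null (t := ⋃ n : ℤ, {ω | T ω = x - n * π}) ?_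
      (measure_iUnion_null fun n => hna _)
    intro ω h
    simp only [mem_ofPred_eq, ne_eq, not_not] at h
    obtain ⟨n, hn⟩ := Real.sin_eq_zero_iff.1 h
    simp only [mem_iUnion, mem_ofPred_eq]
    exact ⟨n, by linarith⟩
  have hb : ∀ t : ℝ, ‖Real.sin t / |Real.sin t|‖ ≤ 1 := by
    intro t
    rw [norm_div, Real.norm_eq_abs, Real.norm_eq_abs, abs_abs]
    exact div_self_le_one _
  have hm : ∀ x, Measurable fun ω => Real.sin (x - T ω) / |Real.sin (x - T ω)| := by
    intro x; fun_prop
  have hd : ∀ x, HasDerivAt (genPhi μ T)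
      (∫ ω, Real.sin (x - T ω) / |Real.sin (x - T ω)| ∂μ) x := by
    intro x
    refine (hasDerivAt_integral_of_dominated_loc_of_lip (bound := fun _ => 1)
      (F := fun x ω => triW (x - T ω)) (s := univ) Filter.univ_mem
      (Filter.Eventually.of_forall fun y => (triW_meas hT y).aestronglyMeasurable)
      (triW_int μ hT x) (hm x).aestronglyMeasurable (ae_of_all _ fun ω => ?_)
      (integrable_const _) ?_).2
    · refine LipschitzWith.lipschitzOnWith (LipschitzWith.of_dist_le_mul fun y z => ?_)
      rw [Real.dist_eq, Real.dist_eq]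
      refine (triW_lip _ _).trans (le_of_eq ?_)
      simp
    · filter_upwards [hsin x] with ω h
      exact HasDerivAt.comp_sub_const x (T ω) (triW_hasDerivAt h)
  rw [contDiff_one_iff_deriv]
  refine ⟨fun x => (hd x).differentiableAt, ?_⟩
  have : deriv (genPhi μ T) = fun x => ∫ ω, Real.sin (x - T ω) / |Real.sin (x - T ω)| ∂μ :=
    funext fun x => (hd x).deriv
  rw [this, continuous_iff_continuousAt]
  intro x
  refine continuousAt_of_dominated (bound := fun _ => 1)
    (Filter.Eventually.of_forall fun y => (hm y).aestronglyMeasurable)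
    (Filter.Eventually.of_forall fun y => ae_of_all _ fun ω => hb _) (integrable_const _) ?_
  filter_upwards [hsin x] with ω h
  refine ContinuousAt.div (by fun_prop) (by fun_prop) (abs_ne_zero.2 h)

lemma genPhi_not_affine_aux (μ : Measure Ω) [IsFiniteMeasure μ] {T : Ω → ℝ} (hT : Measurable T)
    (hT0 : ∀ ω, 0 ≤ T ω) (hT1 : ∀ ω, T ω ≤ π)
    (hsupp : ∀ u v, 0 ≤ u → u < v → v ≤ π → 0 < μ {ω | T ω ∈ Ioo u v})
    (u v : ℝ) (hu : 0 ≤ u) (huv : u < v) (hv : v ≤ π) (a b : ℝ)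
    (h : ∀ t ∈ Icc u v, genPhi μ T t = a * t + b) : False := by
  set x := (u + v) / 2 with hx
  have h1 := h u ⟨le_rfl, huv.le⟩
  have h2 := h v ⟨huv.le, le_rfl⟩
  have h3 := h x ⟨by linarith, by linarith⟩
  have key : ∫ ω, (triW (u - T ω) + triW (v - T ω) - 2 * triW (x - T ω)) ∂μ = 0 := by
    have i1 : Integrable (fun ω => triW (u - T ω) + triW (v - T ω)) μ :=
      (triW_int μ hT u).add (triW_int μ hT v)
    rw [integral_sub i1 ((triW_int μ hT x).const_mul 2),
      integral_add (triW_int μ hT u) (triW_int μ hT v), integral_const_mul]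
    change genPhi μ T u + genPhi μ T v - 2 * genPhi μ T x = 0
    rw [h1, h2, h3, hx]; ring
  have hab : ∀ t ∈ Icc u v, ∀ ω, triW (t - T ω) = |t - T ω| := by
    intro t ht ω
    apply triW_of_abs_le
    rw [abs_le]
    constructor <;> linarith [hT0 ω, hT1 ω, ht.1, ht.2]
  have hmid : ∀ ω, triW (u - T ω) + triW (v - T ω) - 2 * triW (x - T ω)
      = |u - T ω| + |v - T ω| - 2 * |x - T ω| := by
    intro ω
    rw [hab u ⟨le_rfl, huv.le⟩, hab v ⟨huv.le, le_rfl⟩, hab x ⟨by linarith, by linarith⟩]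
  rw [integral_eq_zero_iff_of_nonneg] at key
  · have hpos := hsupp u v hu huv hv
    have : μ {ω | T ω ∈ Ioo u v} = 0 := by
      refine measure_mono_null ?_ (ae_iff.1 key)
      intro ω hω
      simp only [mem_ofPred_eq, mem_Ioo] at hω
      simp only [mem_ofPred_eq, hmid, Pi.zero_apply]
      rw [abs_of_neg (by linarith : u - T ω < 0), abs_of_pos (by linarith : 0 < v - T ω)]
      rcases abs_cases (x - T ω) with h | h <;> rw [h.1] <;> intro h' <;> linarith
    exact hpos.ne' this
  · intro ω
    simp only [hmid, Pi.zero_apply]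
    have := abs_add_le (u - T ω) (v - T ω)
    have e : u - T ω + (v - T ω) = 2 * (x - T ω) := by rw [hx]; ring
    rw [e, abs_mul, abs_two] at this
    linarith
  · exact ((triW_int μ hT u).add (triW_int μ hT v)).sub ((triW_int μ hT x).const_mul 2)

lemma genPhi_not_affine (μ : Measure Ω) [IsFiniteMeasure μ] {T : Ω → ℝ} (hT : Measurable T)
    (hT0 : ∀ ω, 0 ≤ T ω) (hT1 : ∀ ω, T ω ≤ π)
    (hsupp : ∀ u v, 0 ≤ u → u < v → v ≤ π → 0 < μ {ω | T ω ∈ Ioo u v})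
    (u v : ℝ) (huv : u < v) :
    ¬ ∃ a b : ℝ, ∀ t ∈ Ioo u v, genPhi μ T t = a * t + b := by
  rintro ⟨a, b, h⟩
  have hpi := Real.pi_pos
  -- reduce to [0, 2π) by periodicity
  set k := ⌊u / (2 * π)⌋ with hk
  have hk1 : (k : ℝ) * (2 * π) ≤ u := by
    have := Int.floor_le (u / (2 * π))
    rwa [le_div_iff₀ (by positivity)] at this
  have hk2 : u < ((k : ℝ) + 1) * (2 * π) := by
    have := Int.lt_floor_add_one (u / (2 * π))
    rwa [div_lt_iff₀ (by positivity)] at this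
  have hper : ∀ t, genPhi μ T (t + k * (2 * π)) = genPhi μ T t := by
    intro t
    have : Function.Periodic (genPhi μ T) (2 * π) := genPhi_two_pi μ T
    exact this.int_mul k t
  set u' := u - k * (2 * π) with hu'
  by_cases hc : u' < π
  · set v' := min (v - k * (2 * π)) π
    have hlt : u' < v' := lt_min (by linarith) hc
    refine genPhi_not_affine_aux μ hT hT0 hT1 hsupp ((2 * u' + v') / 3) ((u' + 2 * v') / 3)
      (by linarith) (by linarith) (by linarith [min_le_right (v - k * (2 * π)) π])
      a (a * (k * (2 * π)) + b) ?_
    intro t ht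
    have hm := min_le_left (v - k * (2 * π)) π
    rw [← hper, h _ ⟨by linarith [ht.1], by linarith [ht.2]⟩]
    ring
  · set u'' := u' - π
    set v' := min (v - k * (2 * π) - π) π
    have hlt : u'' < v' := lt_min (by linarith) (by linarith)
    refine genPhi_not_affine_aux μ hT hT0 hT1 hsupp ((2 * u'' + v') / 3) ((u'' + 2 * v') / 3)
      (by linarith) (by linarith) (by linarith [min_le_right (v - k * (2 * π) - π) π])
      (-a) (μ.real univ * π - (a * (π + k * (2 * π)) + b)) ?_
    intro t ht
    have hm := min_le_left (v - k * (2 * π) - π) π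
    have h1 := genPhi_pi μ hT t
    have h2 := hper (t + π)
    rw [h _ ⟨by linarith [ht.1], by linarith [ht.2]⟩] at h2
    linarith

end genPhi

lemma ApNorm_one (f : ℝ → ℂ) : ApNorm 1 f = ∑' k : ℤ, ‖fourierCoef f k‖ₑ := by
  unfold ApNorm
  simp [enorm_eq_nnnorm]

lemma exists_bound_Icc {f : ℝ → ℂ} (hf : Continuous f) :
    ∃ K : ℝ, 0 ≤ K ∧ ∀ t ∈ Icc (0:ℝ) (2 * π), ‖f t‖ ≤ K := by
  obtain ⟨K, hK⟩ := (isCompact_Icc (a := (0:ℝ)) (b := 2 * π)).exists_bound_of_continuousOn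
    hf.continuousOn
  exact ⟨max K 0, le_max_right _ _, fun t ht => (hK t ht).trans (le_max_left _ _)⟩

lemma norm_char (k : ℤ) (t : ℝ) : ‖Complex.exp (-Complex.I * (k : ℂ) * (t : ℂ))‖ = 1 := by
  have : -Complex.I * (k : ℂ) * (t : ℂ) = ((-(k * t) : ℝ) : ℂ) * Complex.I := by push_cast; ring
  rw [this, Complex.norm_exp_ofReal_mul_I]

lemma ApNorm_tsum_le {F : ℕ → ℝ → ℂ} {G : ℝ → ℂ} {B : ℕ → ℝ} (hF : ∀ i, Continuous (F i))
    (hB : ∀ i, ∀ t ∈ Icc (0:ℝ) (2 * π), ‖F i t‖ ≤ B i) (hs : Summable B)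
    (hG : ∀ t, G t = ∑' i, F i t) : ApNorm 1 G ≤ ∑' i, ApNorm 1 (F i) := by
  have hp : (0:ℝ) ≤ 2 * π := by positivity
  have hcoef : ∀ k, fourierCoef G k = ∑' i, fourierCoef (F i) k := by
    intro k
    have := intervalIntegral.hasSum_integral_of_dominated_convergence (a := (0:ℝ)) (b := 2 * π)
      (μ := volume) (F := fun i t => F i t * Complex.exp (-Complex.I * (k : ℂ) * (t : ℂ)))
      (f := fun t => G t * Complex.exp (-Complex.I * (k : ℂ) * (t : ℂ)))
      (fun i _ => B i) ?_ ?_ ?_ ?_ ?_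
    · unfold fourierCoef
      rw [← this.tsum_eq, tsum_mul_left]
    · intro i
      exact Continuous.aestronglyMeasurable (by have := hF i; fun_prop)
    · intro i
      refine ae_of_all _ fun t ht => ?_
      rw [norm_mul, norm_char, mul_one]
      rw [uIoc_of_le hp] at ht
      exact hB i t ⟨ht.1.le, ht.2⟩
    · exact ae_of_all _ fun t ht => hs
    · exact intervalIntegrable_const
    · refine ae_of_all _ fun t ht => ?_
      rw [uIoc_of_le hp] at ht
      rw [hG t]
      refine HasSum.mul_right _ (Summable.hasSum ?_)
      exact Summable.of_norm_bounded hs fun i => hB i t ⟨ht.1.le, ht.2⟩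
  rw [ApNorm_one]
  calc ∑' k : ℤ, ‖fourierCoef G k‖ₑ ≤ ∑' k : ℤ, ∑' i, ‖fourierCoef (F i) k‖ₑ := by
        refine ENNReal.tsum_le_tsum fun k => ?_
        rw [hcoef k]
        exact enorm_tsum_le_tsum_enorm
    _ = ∑' i, ∑' k : ℤ, ‖fourierCoef (F i) k‖ₑ := ENNReal.tsum_comm
    _ = _ := by simp_rw [ApNorm_one]

lemma ApNorm_add_le {f g : ℝ → ℂ} (hf : Continuous f) (hg : Continuous g) :
    ApNorm 1 (fun t => f t + g t) ≤ ApNorm 1 f + ApNorm 1 g := by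
  simp_rw [ApNorm_one]
  rw [← ENNReal.tsum_add]
  refine ENNReal.tsum_le_tsum fun k => ?_
  have : fourierCoef (fun t => f t + g t) k = fourierCoef f k + fourierCoef g k := by
    unfold fourierCoef
    rw [← mul_add, ← intervalIntegral.integral_add]
    · simp_rw [add_mul]
    · exact Continuous.intervalIntegrable (by fun_prop) _ _
    · exact Continuous.intervalIntegrable (by fun_prop) _ _
  rw [this]
  exact enorm_add_le _ _

lemma ApNorm_const_mul (c : ℂ) (f : ℝ → ℂ) :
    ApNorm 1 (fun t => c * f t) = ‖c‖ₑ * ApNorm 1 f := by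
  simp_rw [ApNorm_one]
  rw [← ENNReal.tsum_mul_left]
  congr 1; ext k
  rw [← enorm_mul]
  congr 1
  unfold fourierCoef
  simp_rw [mul_assoc c]
  rw [intervalIntegral.integral_const_mul]
  ring

lemma ApNorm_char_mul (n : ℤ) (f : ℝ → ℂ) :
    ApNorm 1 (fun t => f t * Complex.exp (Complex.I * n * t)) = ApNorm 1 f := by
  simp_rw [ApNorm_one]
  rw [← (Equiv.subRight n).tsum_eq (fun k => ‖fourierCoef f k‖ₑ)]
  congr 1; ext k
  congr 1
  unfold fourierCoef
  congr 2; ext t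
  rw [mul_assoc, ← Complex.exp_add]
  congr 2
  simp only [Equiv.subRight_apply]
  push_cast; ring

/-- `g` acts as a multiplier on the Wiener algebra, with norm at most `B`. -/
structure AMult (g : ℝ → ℂ) (B : ℝ) : Prop where
  cont : Continuous g
  bound : ∀ t, ‖g t‖ ≤ B
  mult : ∀ f : ℝ → ℂ, Continuous f → ApNorm 1 (fun t => f t * g t) ≤ ENNReal.ofReal B * ApNorm 1 f

namespace AMult

lemma nonneg {g : ℝ → ℂ} {B : ℝ} (h : AMult g B) : 0 ≤ B := (norm_nonneg _).trans (h.bound 0)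

lemma mono {g : ℝ → ℂ} {B B' : ℝ} (h : AMult g B) (hB : B ≤ B') : AMult g B' :=
  ⟨h.cont, fun t => (h.bound t).trans hB, fun f hf => (h.mult f hf).trans (by gcongr)⟩

lemma one : AMult (fun _ => 1) 1 := ⟨continuous_const, by simp, by simp⟩

lemma char (n : ℤ) : AMult (fun t => Complex.exp (Complex.I * n * t)) 1 := by
  refine ⟨by fun_prop, fun t => ?_, fun f _ => ?_⟩
  · have := norm_char (-n) t
    push_cast at this
    rw [neg_mul_neg] at this
    exact this.le
  · rw [ApNorm_char_mul]; simp

lemma const_mul {g : ℝ → ℂ} {B : ℝ} (h : AMult g B) (c : ℂ) :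
    AMult (fun t => c * g t) (‖c‖ * B) := by
  refine ⟨continuous_const.mul h.cont, fun t => ?_, fun f hf => ?_⟩
  · rw [norm_mul]; gcongr; exact h.bound t
  · have : (fun t => f t * (c * g t)) = fun t => c * (f t * g t) := by ext t; ring
    rw [this, ApNorm_const_mul, ENNReal.ofReal_mul (norm_nonneg _), mul_assoc, ofReal_norm]
    gcongr
    exact h.mult f hf

lemma add {g g' : ℝ → ℂ} {B B' : ℝ} (h : AMult g B) (h' : AMult g' B') :
    AMult (fun t => g t + g' t) (B + B') := by
  refine ⟨h.cont.add h'.cont, fun t => ?_, fun f hf => ?_⟩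
  · exact (norm_add_le _ _).trans (add_le_add (h.bound t) (h'.bound t))
  · simp_rw [mul_add]
    refine (ApNorm_add_le (hf.mul h.cont) (hf.mul h'.cont)).trans ?_
    rw [ENNReal.ofReal_add h.nonneg h'.nonneg, add_mul]
    exact add_le_add (h.mult f hf) (h'.mult f hf)

lemma mul {g g' : ℝ → ℂ} {B B' : ℝ} (h : AMult g B) (h' : AMult g' B') :
    AMult (fun t => g t * g' t) (B * B') := by
  refine ⟨h.cont.mul h'.cont, fun t => ?_, fun f hf => ?_⟩
  · rw [norm_mul]; exact mul_le_mul (h.bound t) (h'.bound t) (norm_nonneg _) h.nonneg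
  · simp_rw [← mul_assoc]
    refine (h'.mult _ (hf.mul h.cont)).trans ?_
    rw [mul_comm B B', ENNReal.ofReal_mul h'.nonneg, mul_assoc]
    gcongr
    exact h.mult f hf

lemma pow {g : ℝ → ℂ} {B : ℝ} (h : AMult g B) (n : ℕ) : AMult (fun t => g t ^ n) (B ^ n) := by
  induction n with
  | zero => simpa using one
  | succ n ih => simp_rw [pow_succ]; exact ih.mul h

lemma tsum {g : ℕ → ℝ → ℂ} {B : ℕ → ℝ} (h : ∀ i, AMult (g i) (B i)) (hs : Summable B) :
    AMult (fun t => ∑' i, g i t) (∑' i, B i) := by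
  refine ⟨continuous_tsum (fun i => (h i).cont) hs fun i t => (h i).bound t, fun t => ?_,
    fun f hf => ?_⟩
  · exact tsum_of_norm_bounded hs.hasSum fun i => (h i).bound t
  · obtain ⟨K, hK0, hK⟩ := exists_bound_Icc hf
    refine (ApNorm_tsum_le (F := fun i t => f t * g i t) (B := fun i => K * B i)
      (fun i => hf.mul (h i).cont) (fun i t ht => ?_) (hs.mul_left K)
      (fun t => tsum_mul_left.symm)).trans ?_
    · rw [norm_mul]; exact mul_le_mul (hK t ht) ((h i).bound t) (norm_nonneg _) hK0
    · rw [ENNReal.ofReal_tsum_of_nonneg (fun i => (h i).nonneg) hs, ← ENNReal.tsum_mul_right]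
      exact ENNReal.tsum_le_tsum fun i => (h i).mult f hf

lemma exp {g : ℝ → ℂ} {B : ℝ} (h : AMult g B) :
    AMult (fun t => Complex.exp (g t)) (Real.exp B) := by
  have h1 := tsum (fun n => (h.pow n).const_mul ((n.factorial : ℂ)⁻¹))
    (by
      have := Real.summable_pow_div_factorial B
      refine this.congr fun n => ?_
      simp [div_eq_inv_mul])
  have e1 : (∑' n : ℕ, ‖((n.factorial : ℂ)⁻¹)‖ * B ^ n) = Real.exp B := by
    rw [Real.exp_eq_exp_ℝ, NormedSpace.exp_eq_tsum_div]
    congr 1; ext n; simp [div_eq_inv_mul]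
  have e2 : (fun t => ∑' n : ℕ, ((n.factorial : ℂ)⁻¹) * g t ^ n) = fun t => Complex.exp (g t) := by
    ext t
    rw [Complex.exp_eq_exp_ℂ, NormedSpace.exp_eq_tsum_div]
    congr 1; ext n; simp [div_eq_inv_mul]
  rw [e1, e2] at h1
  exact h1

lemma cos (n : ℕ) : AMult (fun t => ((Real.cos (n * t) : ℝ) : ℂ)) 1 := by
  have := ((char n).const_mul (1/2)).add ((char (-n)).const_mul (1/2))
  convert this using 1
  · ext t
    push_cast
    rw [Complex.cos]
    have e1 : (n:ℂ) * t * Complex.I = Complex.I * n * t := by ring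
    have e2 : -((n:ℂ) * t) * Complex.I = Complex.I * -n * t := by ring
    rw [e1, e2]; ring
  · norm_num

lemma sin (n : ℕ) : AMult (fun t => ((Real.sin (n * t) : ℝ) : ℂ)) 1 := by
  have := ((char (-n)).const_mul (Complex.I/2)).add ((char n).const_mul (-Complex.I/2))
  convert this using 1
  · ext t
    push_cast
    rw [Complex.sin]
    have e1 : (n:ℂ) * t * Complex.I = Complex.I * n * t := by ring
    have e2 : -((n:ℂ) * t) * Complex.I = Complex.I * -n * t := by ring
    rw [e1, e2]; ring
  · norm_num

end AMult

lemma hasSum_cos_sq {t : ℝ} (h0 : 0 ≤ t) (h1 : t ≤ 2 * π) :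
    HasSum (fun n : ℕ => 1 / (n:ℝ) ^ 2 * Real.cos (n * t)) (t ^ 2 / 4 - π * t / 2 + π ^ 2 / 6) := by
  have hp := Real.pi_pos
  have := hasSum_one_div_nat_pow_mul_cos (k := 1) one_ne_zero (x := t / (2 * π))
    ⟨by positivity, by rw [div_le_one (by positivity)]; exact h1⟩
  convert this using 1
  · ext n
    norm_num
    left
    congr 1; field_simp
  · simp [Polynomial.bernoulli, Finset.sum_range_succ, bernoulli]
    field_simp
    ring

lemma hasSum_odd_cos {t : ℝ} (h0 : 0 ≤ t) (h1 : t ≤ π) :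
    HasSum (fun j : ℕ => 1 / ((2 * j + 1 : ℕ):ℝ) ^ 2 * Real.cos ((2 * j + 1 : ℕ) * t))
      (π / 4 * (π / 2 - t)) := by
  have ha := hasSum_cos_sq h0 (by linarith [Real.pi_pos])
  have hb := (hasSum_cos_sq (t := 2 * t) (by linarith) (by linarith)).mul_left (1/4)
  set f := fun n : ℕ => 1 / (n:ℝ) ^ 2 * Real.cos (n * t) with hf
  have hodd : Summable fun j : ℕ => f (2 * j + 1) :=
    ha.summable.comp_injective (i := fun j : ℕ => 2 * j + 1) fun a b h => by simpa using h
  have heven : HasSum (fun j : ℕ => f (2 * j)) (1 / 4 * ((2 * t) ^ 2 / 4 - π * (2 * t) / 2 + π ^ 2 / 6)) := by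
    refine (congrArg (fun g => HasSum g _) (funext fun j => ?_)).mpr hb
    simp only [hf]
    push_cast
    rw [show (2 * (j:ℝ) * t) = j * (2 * t) by ring]
    rw [mul_pow, one_div, one_div, mul_inv]; ring
  have := (heven.even_add_odd hodd.hasSum).unique ha
  have e : ∑' j : ℕ, f (2 * j + 1) = π / 4 * (π / 2 - t) := by linarith
  rw [← e]
  exact hodd.hasSum

lemma triW_series (t : ℝ) :
    HasSum (fun j : ℕ => 1 / ((2 * j + 1 : ℕ):ℝ) ^ 2 * Real.cos ((2 * j + 1 : ℕ) * t))
      (π / 4 * (π / 2 - triW t)) := by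
  have h := hasSum_odd_cos (triW_nonneg t) (triW_le t)
  convert h using 1
  ext j
  have h1 := Polynomial.Chebyshev.T_real_cos t ((2 * j + 1 : ℕ) : ℤ)
  have h2 := Polynomial.Chebyshev.T_real_cos (triW t) ((2 * j + 1 : ℕ) : ℤ)
  have h3 : Real.cos (triW t) = Real.cos t :=
    Real.cos_arccos (Real.neg_one_le_cos t) (Real.cos_le_one t)
  rw [h3, h1] at h2
  simp only [Int.cast_natCast] at h2
  rw [h2]

section pert
variable {Ω : Type*} [MeasurableSpace Ω]

lemma osc_bound (μ : Measure Ω) [IsFiniteMeasure μ] (hμ : μ.real univ ≤ 1) {T T' : Ω → ℝ}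
    {E : Set Ω} (hE : MeasurableSet E) {ρ : ℝ} (hρ0 : 0 ≤ ρ) (hρ1 : ρ ≤ 1)
    (hμE : μ.real E ≤ ρ) (hTE : ∀ ω, ω ∉ E → |T ω - T' ω| ≤ ρ) (n : ℝ) (hn : 1 ≤ n)
    (c : ℝ → ℝ) (hc : ∀ x, |c x| ≤ 1) (hl : ∀ x y, |c x - c y| ≤ |x - y|) :
    |∫ ω, (c (n * T ω) - c (n * T' ω)) ∂μ| ≤ 4 * (√n * √ρ) := by
  have hsρ : ρ ≤ √ρ := by
    rw [Real.le_sqrt hρ0 hρ0]; nlinarith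
  have hsn : 1 ≤ √n := by rw [Real.one_le_sqrt]; exact hn
  have h2 : ∀ x y, |c x - c y| ≤ 2 := fun x y => by
    have := abs_sub (c x) (c y)
    linarith [hc x, hc y]
  have hpt : ∀ ω, ‖c (n * T ω) - c (n * T' ω)‖ ≤
      2 * (√n * √ρ) + E.indicator (fun _ => (2:ℝ)) ω := by
    intro ω
    rw [Real.norm_eq_abs]
    by_cases h : ω ∈ E
    · rw [indicator_of_mem h]
      have : 0 ≤ √n * √ρ := by positivity
      linarith [h2 (n * T ω) (n * T' ω)]
    · rw [indicator_of_notMem h, add_zero]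
      have hA : |c (n * T ω) - c (n * T' ω)| ≤ n * ρ := by
        refine (hl _ _).trans ?_
        rw [← mul_sub, abs_mul, abs_of_pos (by linarith)]
        have := hTE ω h
        gcongr
      have hB := h2 (n * T ω) (n * T' ω)
      rw [← Real.sqrt_mul (by linarith)]
      by_cases h1 : n * ρ ≤ 1
      · have : n * ρ ≤ √(n * ρ) := by
          rw [Real.le_sqrt (by positivity) (by positivity)]
          have : 0 ≤ n * ρ := by positivity
          nlinarith
        linarith [Real.sqrt_nonneg (n * ρ)]
      · have : 1 ≤ √(n * ρ) := by rw [Real.one_le_sqrt]; linarith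
        linarith
  rw [← Real.norm_eq_abs]
  have hi : Integrable (fun ω => 2 * (√n * √ρ) + E.indicator (fun _ => (2:ℝ)) ω) μ :=
    (integrable_const _).add ((integrable_const _).indicator hE)
  refine (norm_integral_le_of_norm_le hi (ae_of_all _ hpt)).trans ?_
  rw [integral_add (integrable_const _) ((integrable_const _).indicator hE),
    integral_indicator_const _ hE]
  simp only [integral_const, smul_eq_mul]
  have h3 : μ.real univ * (2 * (√n * √ρ)) ≤ 1 * (2 * (√n * √ρ)) := by gcongr
  have h4 : √ρ ≤ √n * √ρ := le_mul_of_one_le_left (Real.sqrt_nonneg _) hsn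
  linarith

lemma genPhi_hasSum (μ : Measure Ω) [IsFiniteMeasure μ] {T : Ω → ℝ} (hT : Measurable T) (x : ℝ) :
    HasSum (fun j : ℕ => 1 / ((2 * j + 1 : ℕ):ℝ) ^ 2 *
      ∫ ω, Real.cos ((2 * j + 1 : ℕ) * (x - T ω)) ∂μ)
      (π / 4 * (π / 2 * μ.real univ - genPhi μ T x)) := by
  have h1 : Summable (fun j : ℕ => 1 / ((2 * j + 1 : ℕ):ℝ) ^ 2) :=
    (Real.summable_one_div_nat_pow.2 (one_lt_two)).comp_injective
      (i := fun j : ℕ => 2 * j + 1) fun a b h => by simpa using h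
  have hIntg : ∀ j : ℕ, Integrable (fun ω => 1 / ((2 * j + 1 : ℕ):ℝ) ^ 2 *
      Real.cos ((2 * j + 1 : ℕ) * (x - T ω))) μ := by
    intro j
    refine Integrable.of_bound (by fun_prop) (1 / ((2 * j + 1 : ℕ):ℝ) ^ 2) (ae_of_all _ fun ω => ?_)
    rw [norm_mul, Real.norm_of_nonneg (by positivity)]
    exact mul_le_of_le_one_right (by positivity) (Real.abs_cos_le_one _)
  have := hasSum_integral_of_summable_integral_norm hIntg ?_
  · have e : π / 4 * (π / 2 * μ.real univ - genPhi μ T x) = ∫ ω, ∑' j : ℕ,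
        1 / ((2 * j + 1 : ℕ):ℝ) ^ 2 * Real.cos ((2 * j + 1 : ℕ) * (x - T ω)) ∂μ := by
      unfold genPhi
      simp_rw [(triW_series _).tsum_eq]
      rw [integral_const_mul, integral_sub (integrable_const _) (triW_int μ hT x)]
      simp only [integral_const, smul_eq_mul]
      ring
    rw [e]
    refine (congrArg (fun g => HasSum g _) (funext fun j => ?_)).mpr this
    rw [integral_const_mul]
  · refine Summable.of_nonneg_of_le (fun j => integral_nonneg fun ω => norm_nonneg _) (fun j => ?_)
      (h1.mul_left (μ.real univ))
    refine (integral_mono_of_nonneg (ae_of_all _ fun ω => norm_nonneg _)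
      (integrable_const (1 / ((2 * j + 1 : ℕ):ℝ) ^ 2)) (ae_of_all _ fun ω => ?_)).trans ?_
    · beta_reduce
      rw [norm_mul, Real.norm_of_nonneg (by positivity)]
      exact mul_le_of_le_one_right (by positivity) (Real.abs_cos_le_one _)
    · simp

lemma pert_amult (μ : Measure Ω) [IsFiniteMeasure μ] (hμ : μ.real univ ≤ 1) {T T' : Ω → ℝ}
    (hT : Measurable T) (hT' : Measurable T')
    {E : Set Ω} (hE : MeasurableSet E) {ρ : ℝ} (hρ0 : 0 ≤ ρ) (hρ1 : ρ ≤ 1)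
    (hμE : μ.real E ≤ ρ) (hTE : ∀ ω, ω ∉ E → |T ω - T' ω| ≤ ρ) :
    AMult (fun x => ((genPhi μ T x - genPhi μ T' x : ℝ) : ℂ))
      ((∑' j : ℕ, 32 / π * (1 / ((2 * j + 1 : ℕ):ℝ) ^ (3/2 : ℝ))) * √ρ) := by
  set A : ℕ → ℝ := fun n => ∫ ω, (Real.cos (n * T ω) - Real.cos (n * T' ω)) ∂μ with hA
  set B : ℕ → ℝ := fun n => ∫ ω, (Real.sin (n * T ω) - Real.sin (n * T' ω)) ∂μ with hB
  have hAb : ∀ n : ℕ, 1 ≤ n → |A n| ≤ 4 * (√n * √ρ) := fun n hn =>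
    osc_bound μ hμ hE hρ0 hρ1 hμE hTE n (by exact_mod_cast hn) Real.cos Real.abs_cos_le_one
      (fun x y => by
        have := Real.lipschitzWith_cos.dist_le_mul x y
        simpa [Real.dist_eq] using this)
  have hBb : ∀ n : ℕ, 1 ≤ n → |B n| ≤ 4 * (√n * √ρ) := fun n hn =>
    osc_bound μ hμ hE hρ0 hρ1 hμE hTE n (by exact_mod_cast hn) Real.sin Real.abs_sin_le_one
      (fun x y => by
        have := Real.lipschitzWith_sin.dist_le_mul x y
        simpa [Real.dist_eq] using this)
  have hic : ∀ (S : Ω → ℝ) (_ : Measurable S) (n : ℕ), Integrable (fun ω => Real.cos (n * S ω)) μ :=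
    fun S hS n => Integrable.of_bound (by fun_prop) 1 (ae_of_all _ fun ω => Real.abs_cos_le_one _)
  have his : ∀ (S : Ω → ℝ) (_ : Measurable S) (n : ℕ), Integrable (fun ω => Real.sin (n * S ω)) μ :=
    fun S hS n => Integrable.of_bound (by fun_prop) 1 (ae_of_all _ fun ω => Real.abs_sin_le_one _)
  have hexp : ∀ (S : Ω → ℝ) (_ : Measurable S) (n : ℕ) (x : ℝ), ∫ ω, Real.cos (n * (x - S ω)) ∂μ =
      Real.cos (n * x) * ∫ ω, Real.cos (n * S ω) ∂μ + Real.sin (n * x) * ∫ ω, Real.sin (n * S ω) ∂μ := by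
    intro S hS n x
    simp_rw [mul_sub, Real.cos_sub]
    rw [integral_add ((hic S hS n).const_mul _) ((his S hS n).const_mul _), integral_const_mul,
      integral_const_mul]
  have hser : ∀ x, genPhi μ T x - genPhi μ T' x = ∑' j : ℕ, (-(4 / π) * (1 / ((2 * j + 1 : ℕ):ℝ) ^ 2)) *
      (A (2 * j + 1) * Real.cos ((2 * j + 1 : ℕ) * x) + B (2 * j + 1) * Real.sin ((2 * j + 1 : ℕ) * x)) := by
    intro x
    have := ((genPhi_hasSum μ hT x).sub (genPhi_hasSum μ hT' x)).mul_left (-(4 / π))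
    have e : -(4 / π) * (π / 4 * (π / 2 * μ.real univ - genPhi μ T x) -
      π / 4 * (π / 2 * μ.real univ - genPhi μ T' x)) = genPhi μ T x - genPhi μ T' x := by
      have := Real.pi_pos
      field_simp; ring
    rw [e] at this
    rw [← this.tsum_eq]
    congr 1; ext j
    rw [hexp T hT, hexp T' hT']
    simp only [hA, hB]
    rw [integral_sub (hic T hT _) (hic T' hT' _), integral_sub (his T hT _) (his T' hT' _)]
    ring
  have hsum : Summable (fun j : ℕ => 32 / π * (1 / ((2 * j + 1 : ℕ):ℝ) ^ (3/2 : ℝ))) := by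
    refine Summable.mul_left _ ?_
    exact (Real.summable_one_div_nat_rpow.2 (by norm_num : (1:ℝ) < 3/2)).comp_injective
      (i := fun j : ℕ => 2 * j + 1) fun a b h => by simpa using h
  have hterm : ∀ j : ℕ, AMult (fun x => (((-(4 / π) * (1 / ((2 * j + 1 : ℕ):ℝ) ^ 2) : ℝ)) : ℂ) *
      ((A (2 * j + 1) : ℂ) * (Real.cos ((2 * j + 1 : ℕ) * x) : ℝ) +
        (B (2 * j + 1) : ℂ) * (Real.sin ((2 * j + 1 : ℕ) * x) : ℝ)))
      ((32 / π * (1 / ((2 * j + 1 : ℕ):ℝ) ^ (3/2 : ℝ))) * √ρ) := by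
    intro j
    refine ((((AMult.cos (2 * j + 1)).const_mul (A (2 * j + 1))).add
      ((AMult.sin (2 * j + 1)).const_mul (B (2 * j + 1)))).const_mul _).mono ?_
    have h1 := hAb (2 * j + 1) (by omega)
    have h2 := hBb (2 * j + 1) (by omega)
    rw [Complex.norm_real, Complex.norm_real, Complex.norm_real, Real.norm_eq_abs, Real.norm_eq_abs,
      Real.norm_eq_abs, mul_one, mul_one, neg_mul, abs_neg, abs_of_nonneg (by positivity)]
    set n : ℝ := ((2 * j + 1 : ℕ) : ℝ) with hn
    have hn0 : 0 < n := by rw [hn]; positivity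
    have e : 1 / n ^ (3/2 : ℝ) = 1 / n ^ 2 * √n := by
      rw [Real.sqrt_eq_rpow, ← Real.rpow_natCast n 2, one_div, one_div, ← Real.rpow_neg hn0.le,
        ← Real.rpow_neg hn0.le, ← Real.rpow_add hn0]
      norm_num
    rw [e]
    calc 4 / π * (1 / n ^ 2) * (|A (2 * j + 1)| + |B (2 * j + 1)|)
        ≤ 4 / π * (1 / n ^ 2) * (4 * (√n * √ρ) + 4 * (√n * √ρ)) := by gcongr
      _ = _ := by ring
  have := AMult.tsum hterm (hsum.mul_right _)
  rw [tsum_mul_right] at this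
  convert this using 1
  ext x
  rw [hser x, Complex.ofReal_tsum]
  congr 1; ext j
  push_cast
  ring

end pert

lemma sum_two_sided {g : ℤ → ℝ} (hg : ∀ k, 0 ≤ g k) (s : Finset ℤ) (j : ℤ) (A : Finset ℕ)
    (hs : ∀ k ∈ s, (k - j).natAbs ∈ A) :
    ∑ k ∈ s, g k ≤ ∑ l ∈ A, (g (j + l) + g (j - l)) := by
  classical
  have hsub : s ⊆ A.image (fun l : ℕ => j + (l:ℤ)) ∪ A.image (fun l : ℕ => j - (l:ℤ)) := by
    intro k hk
    have h := hs k hk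
    rw [Finset.mem_union, Finset.mem_image, Finset.mem_image]
    rcases Int.natAbs_eq (k - j) with e | e
    · left; exact ⟨_, h, by omega⟩
    · right; exact ⟨_, h, by omega⟩
  refine (Finset.sum_le_sum_of_subset_of_nonneg hsub fun i _ _ => hg i).trans ?_
  rw [Finset.sum_add_distrib]
  have h1 := Finset.sum_union_inter (s₁ := A.image (fun l : ℕ => j + (l:ℤ)))
    (s₂ := A.image (fun l : ℕ => j - (l:ℤ))) (f := g)
  have h2 : 0 ≤ ∑ k ∈ A.image (fun l : ℕ => j + (l:ℤ)) ∩ A.image (fun l : ℕ => j - (l:ℤ)), g k :=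
    Finset.sum_nonneg fun i _ => hg i
  rw [Finset.sum_image (fun a _ b _ h => by simpa using h),
    Finset.sum_image (fun a _ b _ h => by simpa using h)] at h1
  linarith

lemma log_sum {g : ℤ → ℝ} (hg : ∀ k, 0 ≤ g k) (hg7 : ∀ k, g k ≤ 7) (θ : ℝ)
    (hθ : ∀ k : ℤ, θ ≠ k → g k ≤ 2 / |θ - k|) (M : ℕ) (hM : |θ| ≤ M) :
    ∑ k ∈ Finset.Icc (-(M:ℤ)) M, g k ≤ 2 * (11 + 4 * Real.log (2 * M + 1)) := by
  set j := round θ with hj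
  have hjθ : |θ - j| ≤ 1 / 2 := abs_sub_round θ
  have hjM : j.natAbs ≤ M + 1 := by
    have h1 : |(j:ℝ)| ≤ M + 1 / 2 := by
      have := abs_sub_abs_le_abs_sub (j:ℝ) θ
      rw [abs_sub_comm] at this
      linarith
    have h2 : |(j:ℝ)| < ((M + 1 : ℤ) : ℝ) := by push_cast; linarith
    have h3 : |j| < M + 1 := by exact_mod_cast h2
    rw [Int.abs_eq_natAbs] at h3
    omega
  refine (sum_two_sided hg _ j (Finset.range (2 * M + 1 + 1)) ?_).trans ?_
  · intro k hk
    rw [Finset.mem_Icc] at hk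
    rw [Finset.mem_range]
    omega
  have hb : ∀ l : ℕ, ∀ k : ℤ, (k - j).natAbs = l + 1 → g k ≤ 4 * ((l:ℝ) + 1)⁻¹ := by
    intro l k hk
    have h1 : |(k:ℝ) - j| = l + 1 := by
      have : |k - j| = l + 1 := by rw [Int.abs_eq_natAbs]; omega
      exact_mod_cast this
    have h2 : ((l:ℝ) + 1) / 2 ≤ |θ - k| := by
      have h3 : |(k:ℝ) - j| ≤ |θ - k| + |θ - j| := by
        have := abs_sub (θ - j) (θ - k)
        rw [show θ - j - (θ - k) = (k:ℝ) - j by ring] at this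
        linarith
      have : (0:ℝ) ≤ l := Nat.cast_nonneg l
      linarith
    have h0 : (0:ℝ) < (l + 1) / 2 := by positivity
    have hne : θ ≠ k := by
      intro e; rw [e] at h2; simp at h2; linarith
    refine (hθ k hne).trans ?_
    calc 2 / |θ - k| ≤ 2 / (((l:ℝ) + 1) / 2) := by gcongr
      _ = _ := by field_simp; norm_num
  rw [Finset.sum_range_succ']
  have hH := harmonic_le_one_add_log (2 * M + 1)
  have hsum : ∑ l ∈ Finset.range (2 * M + 1), (g (j + ((l + 1 : ℕ) : ℤ)) + g (j - ((l + 1 : ℕ) : ℤ)))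
      ≤ ∑ l ∈ Finset.range (2 * M + 1), 8 * ((l:ℝ) + 1)⁻¹ := by
    refine Finset.sum_le_sum fun l _ => ?_
    have a1 := hb l (j + ((l + 1 : ℕ) : ℤ)) (by omega)
    have a2 := hb l (j - ((l + 1 : ℕ) : ℤ)) (by omega)
    linarith
  rw [← Finset.mul_sum] at hsum
  have e : ((harmonic (2 * M + 1) : ℚ) : ℝ) = ∑ l ∈ Finset.range (2 * M + 1), ((l:ℝ) + 1)⁻¹ := by
    simp [harmonic]
  rw [← e] at hsum
  push_cast at hH
  have := hg7 (j + ((0:ℕ):ℤ))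
  have := hg7 (j - ((0:ℕ):ℤ))
  linarith

/-- subadditive interval functionals -/
lemma interval_induction (F : Finset ℝ) (Q : ℝ → ℝ → ℝ) (K : ℝ) (A B : ℝ)
    (hsub : ∀ a c b, A ≤ a → a < c → c < b → b ≤ B → Q a b ≤ Q a c + Q c b)
    (hpiece : ∀ a b, A ≤ a → a < b → b ≤ B → (∀ c ∈ F, c ∉ Ioo a b) → Q a b ≤ K) (hK : 0 ≤ K) :
    ∀ n : ℕ, ∀ a b, A ≤ a → a < b → b ≤ B → (F.filter (fun c => c ∈ Ioo a b)).card ≤ n →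
      Q a b ≤ ((F.filter (fun c => c ∈ Ioo a b)).card + 1) * K := by
  classical
  intro n
  induction n with
  | zero =>
    intro a b ha hab hb hc
    have h0 : F.filter (fun c => c ∈ Ioo a b) = ∅ := Finset.card_eq_zero.1 (by omega)
    rw [h0]
    simp only [Finset.card_empty, Nat.cast_zero, zero_add, one_mul]
    exact hpiece a b ha hab hb fun c hc hc' => by
      have : c ∈ F.filter (fun c => c ∈ Ioo a b) := Finset.mem_filter.2 ⟨hc, hc'⟩
      rw [h0] at this; simp at this
  | succ n ih =>
    intro a b ha hab hb hc
    by_cases h0 : F.filter (fun c => c ∈ Ioo a b) = ∅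
    · exact ih a b ha hab hb (by rw [h0]; simp)
    obtain ⟨c, hcF⟩ := Finset.nonempty_iff_ne_empty.2 h0
    obtain ⟨hcF, hac, hcb⟩ := Finset.mem_filter.1 hcF
    have hcard : (F.filter (fun x => x ∈ Ioo a c)).card + (F.filter (fun x => x ∈ Ioo c b)).card + 1
        ≤ (F.filter (fun x => x ∈ Ioo a b)).card := by
      rw [← Finset.card_union_of_disjoint, ← Finset.card_insert_of_notMem (a := c)]
      · apply Finset.card_le_card
        intro x
        simp only [Finset.mem_insert, Finset.mem_union, Finset.mem_filter, mem_Ioo]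
        rintro (rfl | ⟨h, h1, h2⟩ | ⟨h, h1, h2⟩)
        · exact ⟨hcF, hac, hcb⟩
        · exact ⟨h, h1, h2.trans hcb⟩
        · exact ⟨h, hac.trans h1, h2⟩
      · simp
      · rw [Finset.disjoint_left]
        intro x
        simp only [Finset.mem_filter, mem_Ioo]
        rintro ⟨_, _, h⟩ ⟨_, h', _⟩
        linarith
    have h1 := ih a c ha hac (hcb.le.trans hb) (by omega)
    have h2 := ih c b (ha.trans hac.le) hcb hb (by omega)
    have h3 := hsub a c b ha hac hcb hb
    have h4 : ((F.filter (fun x => x ∈ Ioo a c)).card : ℝ) + (F.filter (fun x => x ∈ Ioo c b)).card + 1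
        ≤ (F.filter (fun x => x ∈ Ioo a b)).card := by exact_mod_cast hcard
    nlinarith

lemma norm_exp_I_real (c : ℝ) : ‖Complex.exp (Complex.I * c)‖ = 1 := by
  rw [mul_comm, Complex.norm_exp_ofReal_mul_I]

lemma exp_piece_norm (c0 : ℂ) (ξ : ℝ) (hξ : ξ ≠ 0) (a b : ℝ) :
    ∫ t in a..b, c0 * Complex.exp (Complex.I * ξ * t) =
      (c0 * Complex.exp (Complex.I * ξ * b) - c0 * Complex.exp (Complex.I * ξ * a)) / (Complex.I * ξ) := by
  rw [intervalIntegral.integral_const_mul, integral_exp_mul_complex]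
  · ring
  · simpa using hξ

lemma PL_bound (φ : ℝ → ℝ) (hφ : Continuous φ) (hper : φ (2 * π) = φ 0) (F : Finset ℝ)
    (hPL : ∀ a b, 0 ≤ a → a < b → b ≤ 2 * π → (∀ c ∈ F, c ∉ Ioo a b) →
      ∃ σ : ℝ, |σ| ≤ 1 ∧ ∀ t ∈ Icc a b, φ t = φ a + σ * (t - a))
    (lam : ℝ) (hlam : 2 ≤ |lam|) :
    ApNorm 1 (fun t => Complex.exp (Complex.I * (lam : ℂ) * (φ t : ℂ))) ≤
      ENNReal.ofReal (72 * (F.card + 1) * Real.log |lam|) := by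
  have hpi := Real.pi_pos
  set f : ℝ → ℂ := fun t => Complex.exp (Complex.I * (lam : ℂ) * (φ t : ℂ)) with hf
  have hfc : Continuous f := by rw [hf]; fun_prop
  set G : ℤ → ℝ → ℂ := fun k t => f t * Complex.exp (-Complex.I * (k : ℂ) * (t : ℂ)) with hG
  have hGc : ∀ k, Continuous (G k) := by intro k; rw [hG]; fun_prop
  have hfn : ∀ t, ‖f t‖ = 1 := by
    intro t
    have := norm_exp_I_real (lam * φ t)
    push_cast at this
    rw [← mul_assoc] at this
    exact this
  have hGn : ∀ k t, ‖G k t‖ = 1 := by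
    intro k t; simp only [hG]; rw [norm_mul, norm_char, hfn, one_mul]
  have hGi : ∀ k a b, IntervalIntegrable (G k) volume a b := fun k a b =>
    (hGc k).intervalIntegrable a b
  have hpieceG : ∀ a b, 0 ≤ a → a < b → b ≤ 2 * π → (∀ c ∈ F, c ∉ Ioo a b) →
      ∃ θ : ℝ, |θ| ≤ |lam| ∧ ∀ k : ℤ, θ ≠ k →
        ∫ t in a..b, G k t = (G k b - G k a) / (Complex.I * ((θ - k : ℝ) : ℂ)) := by
    intro a b ha hab hb hF
    obtain ⟨σ, hσ, h⟩ := hPL a b ha hab hb hF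
    refine ⟨lam * σ, ?_, fun k hk => ?_⟩
    · rw [abs_mul]; exact mul_le_of_le_one_right (abs_nonneg _) hσ
    · set c0 : ℂ := Complex.exp (Complex.I * ((lam * (φ a - σ * a) : ℝ) : ℂ)) with hc0
      have e : ∀ t ∈ Icc a b, G k t = c0 * Complex.exp (Complex.I * ((lam * σ - k : ℝ) : ℂ) * t) := by
        intro t ht
        simp only [hG, hf, hc0]
        rw [h t ht, ← Complex.exp_add, ← Complex.exp_add]
        congr 1; push_cast; ring
      rw [e b ⟨hab.le, le_rfl⟩, e a ⟨le_rfl, hab.le⟩,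
        ← exp_piece_norm c0 _ (sub_ne_zero.2 hk)]
      refine intervalIntegral.integral_congr fun t ht => ?_
      rw [uIcc_of_le hab.le] at ht
      exact e t ht
  have hlog : Real.log 2 ≤ Real.log |lam| := Real.log_le_log (by norm_num) hlam
  have hlog2 : 0.69 < Real.log |lam| := by linarith [Real.log_two_gt_d9]
  -- low frequencies
  set M : ℕ := ⌈2 * |lam|⌉₊ with hM
  have hM1 : 2 * |lam| ≤ M := Nat.le_ceil _
  have hM2 : (M:ℝ) < 2 * |lam| + 1 := Nat.ceil_lt_add_one (by positivity)
  have hlow : ∑ k ∈ Finset.Icc (-(M:ℤ)) M, ‖∫ t in (0:ℝ)..(2 * π), G k t‖ ≤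
      (F.card + 1) * (64 * Real.log |lam|) := by
    have := interval_induction F
      (fun a b => ∑ k ∈ Finset.Icc (-(M:ℤ)) M, ‖∫ t in a..b, G k t‖)
      (64 * Real.log |lam|) 0 (2 * π) ?_ ?_ (by linarith) _ 0 (2 * π) le_rfl (by positivity) le_rfl le_rfl
    · refine this.trans ?_
      have : ((F.filter (fun c => c ∈ Ioo 0 (2 * π))).card : ℝ) ≤ F.card := by
        exact_mod_cast Finset.card_filter_le _ _
      gcongr
    · intro a c b _ _ _ _
      rw [← Finset.sum_add_distrib]
      refine Finset.sum_le_sum fun k _ => ?_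
      rw [← intervalIntegral.integral_add_adjacent_intervals (hGi k a c) (hGi k c b)]
      exact norm_add_le _ _
    · intro a b ha hab hb hF
      obtain ⟨θ, hθ, h⟩ := hpieceG a b ha hab hb hF
      refine (log_sum (g := fun k => ‖∫ t in a..b, G k t‖) (fun k => norm_nonneg _) (fun k => ?_) θ
        (fun k hk => ?_) M ?_).trans ?_
      · have := intervalIntegral.norm_integral_le_of_norm_le_const (f := G k) (a := a) (b := b) (C := 1)
          (fun t _ => (hGn k t).le)
        rw [abs_of_pos (by linarith)] at this
        have := Real.pi_lt_d2
        linarith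
      · rw [h k hk, norm_div, norm_mul, Complex.norm_I, one_mul, Complex.norm_real, Real.norm_eq_abs]
        gcongr
        refine (norm_sub_le _ _).trans ?_
        rw [hGn, hGn]; norm_num
      · linarith [abs_nonneg lam]
      · have h1 : (2 * (M:ℝ) + 1) ≤ |lam| ^ 4 := by
          have : (2:ℝ) ^ 3 ≤ |lam| ^ 3 := by gcongr
          have e : |lam| ^ 4 = |lam| ^ 3 * |lam| := by ring
          rw [e]
          nlinarith
        have h2 := Real.log_le_log (by positivity) h1
        rw [Real.log_pow] at h2
        push_cast at h2
        linarith
  -- high frequencies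
  have hhigh : ∀ k : ℤ, (M:ℤ) < |k| → ‖∫ t in (0:ℝ)..(2 * π), G k t‖ ≤
      (F.card + 1) * (4 * |lam| * ((k:ℝ) ^ 2)⁻¹) := by
    intro k hk
    have hk' : 2 * |lam| ≤ |(k:ℝ)| := by
      have : (M:ℝ) < |(k:ℝ)| := by exact_mod_cast hk
      linarith
    have hk0 : (k:ℝ) ≠ 0 := by
      intro e; rw [e, abs_zero] at hk'; linarith
    have hkc : (k:ℂ) ≠ 0 := by exact_mod_cast hk0
    have := interval_induction F
      (fun a b => ‖(∫ t in a..b, G k t) - (G k b - G k a) / (-Complex.I * k)‖)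
      (4 * |lam| * ((k:ℝ) ^ 2)⁻¹) 0 (2 * π) ?_ ?_ (by positivity) _ 0 (2 * π) le_rfl (by positivity) le_rfl le_rfl
    · have e : G k (2 * π) = G k 0 := by
        simp only [hG, hf]
        rw [hper]
        congr 1
        rw [Complex.exp_eq_exp_iff_exists_int]
        exact ⟨-k, by push_cast; ring⟩
      rw [e, sub_self, zero_div, sub_zero] at this
      refine this.trans ?_
      have : ((F.filter (fun c => c ∈ Ioo 0 (2 * π))).card : ℝ) ≤ F.card := by
        exact_mod_cast Finset.card_filter_le _ _
      gcongr
    · intro a c b _ _ _ _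
      rw [← intervalIntegral.integral_add_adjacent_intervals (hGi k a c) (hGi k c b)]
      refine le_trans (le_of_eq ?_) (norm_add_le _ _)
      congr 1
      ring
    · intro a b ha hab hb hF
      obtain ⟨θ, hθ, h⟩ := hpieceG a b ha hab hb hF
      have hd : |(k:ℝ)| / 2 ≤ |θ - k| := by
        have := abs_sub_abs_le_abs_sub (k:ℝ) θ
        rw [abs_sub_comm] at this
        linarith
      have hkpos : 0 < |(k:ℝ)| := abs_pos.2 hk0
      have hne : θ - k ≠ 0 := by
        intro e; rw [e, abs_zero] at hd; linarith
      have hnec : ((θ - k : ℝ) : ℂ) ≠ 0 := by exact_mod_cast hne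
      rw [h k (sub_ne_zero.1 hne)]
      have e : (G k b - G k a) / (Complex.I * ((θ - k : ℝ) : ℂ)) - (G k b - G k a) / (-Complex.I * k)
          = (G k b - G k a) * ((θ:ℂ) / (Complex.I * (k * ((θ - k : ℝ) : ℂ)))) := by
        have hI := Complex.I_ne_zero
        have : (θ:ℂ) = k + ((θ - k : ℝ) : ℂ) := by push_cast; ring
        rw [this]
        field_simp
        ring
      rw [e, norm_mul, norm_div, norm_mul, norm_mul, Complex.norm_I, one_mul, Complex.norm_real,
        Complex.norm_real, Complex.norm_intCast, Real.norm_eq_abs, Real.norm_eq_abs]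
      have h2 : ‖G k b - G k a‖ ≤ 2 := by
        refine (norm_sub_le _ _).trans ?_
        rw [hGn, hGn]; norm_num
      calc ‖G k b - G k a‖ * (|θ| / (|(k:ℝ)| * |θ - k|))
          ≤ 2 * (|lam| / (|(k:ℝ)| * (|(k:ℝ)| / 2))) := by gcongr
        _ = 4 * |lam| * ((k:ℝ) ^ 2)⁻¹ := by
          rw [← sq_abs (k:ℝ)]; field_simp; norm_num
  -- all finite sums
  have hfin : ∀ N : ℕ, M ≤ N → ∑ k ∈ Finset.Icc (-(N:ℤ)) N, ‖∫ t in (0:ℝ)..(2 * π), G k t‖ ≤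
      72 * (F.card + 1) * Real.log |lam| := by
    intro N hN
    have hsub : Finset.Icc (-(M:ℤ)) M ⊆ Finset.Icc (-(N:ℤ)) N := by
      apply Finset.Icc_subset_Icc <;> omega
    rw [← Finset.sum_sdiff hsub]
    have hMpos : (0:ℝ) < M := by linarith
    have hM0 : M ≠ 0 := by exact_mod_cast hMpos.ne'
    have htail : ∑ k ∈ Finset.Icc (-(N:ℤ)) N \ Finset.Icc (-(M:ℤ)) M, ‖∫ t in (0:ℝ)..(2 * π), G k t‖
        ≤ (F.card + 1) * 4 := by
      refine (sum_two_sided (g := fun k => ‖∫ t in (0:ℝ)..(2 * π), G k t‖) (fun k => norm_nonneg _) _ 0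
        (Finset.Ioc M N) ?_).trans ?_
      · intro k hk
        rw [Finset.mem_sdiff, Finset.mem_Icc, Finset.mem_Icc] at hk
        rw [Finset.mem_Ioc]
        omega
      · calc _ ≤ ∑ l ∈ Finset.Ioc M N, ((F.card + 1) * (8 * |lam|)) * ((l:ℝ) ^ 2)⁻¹ := by
              refine Finset.sum_le_sum fun l hl => ?_
              rw [Finset.mem_Ioc] at hl
              have a1 := hhigh (0 + (l:ℤ)) (by rw [Int.abs_eq_natAbs]; omega)
              have a2 := hhigh (0 - (l:ℤ)) (by rw [Int.abs_eq_natAbs]; omega)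
              have e1 : (((0 + (l:ℤ) : ℤ) : ℝ)) ^ 2 = (l:ℝ) ^ 2 := by push_cast; ring
              have e2 : (((0 - (l:ℤ) : ℤ) : ℝ)) ^ 2 = (l:ℝ) ^ 2 := by push_cast; ring
              rw [e1] at a1
              rw [e2] at a2
              linarith
          _ = ((F.card + 1) * (8 * |lam|)) * ∑ l ∈ Finset.Ioc M N, ((l:ℝ) ^ 2)⁻¹ := by
              rw [Finset.mul_sum]
          _ ≤ ((F.card + 1) * (8 * |lam|)) * (M:ℝ)⁻¹ := by
              gcongr
              have := sum_Ioc_inv_sq_le_sub (α := ℝ) hM0 hN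
              have : (0:ℝ) ≤ (N:ℝ)⁻¹ := by positivity
              linarith
          _ ≤ (F.card + 1) * 4 := by
              rw [mul_assoc]
              gcongr
              rw [← div_eq_mul_inv, div_le_iff₀ hMpos]
              linarith
    have hc : (0:ℝ) ≤ F.card + 1 := by positivity
    have : ((F.card:ℝ) + 1) * 4 ≤ (F.card + 1) * (8 * Real.log |lam|) := by
      gcongr; linarith
    linarith
  rw [ApNorm_one]
  have hcoef : ∀ k, ‖fourierCoef f k‖ ≤ ‖∫ t in (0:ℝ)..(2 * π), G k t‖ := by
    intro k
    unfold fourierCoef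
    rw [norm_mul]
    refine mul_le_of_le_one_left (norm_nonneg _) ?_
    have : (1 / (2 * (π:ℂ))) = ((1 / (2 * π) : ℝ) : ℂ) := by push_cast; ring
    rw [this, Complex.norm_real, Real.norm_of_nonneg (by positivity)]
    rw [div_le_one (by positivity)]
    linarith [Real.pi_gt_three]
  rw [ENNReal.tsum_eq_iSup_sum]
  refine iSup_le fun s => ?_
  set N := M + ∑ k ∈ s, k.natAbs with hN
  have hs : s ⊆ Finset.Icc (-(N:ℤ)) N := by
    intro k hk
    have := Finset.single_le_sum (f := fun k : ℤ => k.natAbs) (fun _ _ => Nat.zero_le _) hk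
    rw [Finset.mem_Icc]
    omega
  calc ∑ k ∈ s, ‖fourierCoef f k‖ₑ ≤ ∑ k ∈ s, ENNReal.ofReal ‖∫ t in (0:ℝ)..(2 * π), G k t‖ := by
        refine Finset.sum_le_sum fun k _ => ?_
        rw [← ofReal_norm]
        exact ENNReal.ofReal_le_ofReal (hcoef k)
    _ = ENNReal.ofReal (∑ k ∈ s, ‖∫ t in (0:ℝ)..(2 * π), G k t‖) :=
        (ENNReal.ofReal_sum_of_nonneg fun _ _ => norm_nonneg _).symm
    _ ≤ _ := by
        refine ENNReal.ofReal_le_ofReal ?_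
        refine le_trans ?_ (hfin N (by omega))
        exact Finset.sum_le_sum_of_subset_of_nonneg hs fun _ _ _ => norm_nonneg _

section pl
variable {Ω : Type*} [MeasurableSpace Ω]

lemma triW_affine {τ a b : ℝ} (h0 : 0 ≤ τ) (h1 : τ ≤ π) (ha : 0 ≤ a) (hab : a < b)
    (hb : b ≤ 2 * π) (hk1 : τ ∉ Ioo a b) (hk2 : τ + π ∉ Ioo a b) :
    ∀ t ∈ Icc a b, (b - a) * (triW (t - τ) - triW (a - τ)) =
      (t - a) * (triW (b - τ) - triW (a - τ)) := by
  have hpi := Real.pi_pos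
  have key : ∃ p q : ℝ, ∀ t ∈ Icc a b, triW (t - τ) = p * t + q := by
    by_cases c1 : b ≤ τ
    · refine ⟨-1, τ, fun t ht => ?_⟩
      rw [triW_of_abs_le (by rw [abs_le]; constructor <;> linarith [ht.1, ht.2]),
        abs_of_nonpos (by linarith [ht.2])]
      ring
    · have c1' : τ ≤ a := by
        by_contra h; exact hk1 ⟨by linarith, by linarith⟩
      by_cases c2 : b ≤ τ + π
      · refine ⟨1, -τ, fun t ht => ?_⟩
        rw [triW_of_abs_le (by rw [abs_le]; constructor <;> linarith [ht.1, ht.2]),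
          abs_of_nonneg (by linarith [ht.1])]
        ring
      · have c2' : τ + π ≤ a := by
          by_contra h; exact hk2 ⟨by linarith, by linarith⟩
        refine ⟨-1, τ + 2 * π, fun t ht => ?_⟩
        have e : t - τ = (t - τ - 2 * π) + 2 * π := by ring
        rw [e, triW_two_pi, triW_of_abs_le (by rw [abs_le]; constructor <;> linarith [ht.1, ht.2]),
          abs_of_nonpos (by linarith [ht.2])]
        ring
  obtain ⟨p, q, h⟩ := key
  intro t ht
  rw [h t ht, h a ⟨le_rfl, hab.le⟩, h b ⟨hab.le, le_rfl⟩]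
  ring

lemma genPhi_PL_bound (μ : Measure Ω) [IsFiniteMeasure μ] (hμ : μ.real univ ≤ 1) {T : Ω → ℝ}
    (hT : Measurable T) (hT0 : ∀ ω, 0 ≤ T ω) (hT1 : ∀ ω, T ω ≤ π) (V : Finset ℝ)
    (hV : ∀ ω, T ω ∈ V) (lam : ℝ) (hlam : 2 ≤ |lam|) :
    ApNorm 1 (fun t => Complex.exp (Complex.I * (lam : ℂ) * (genPhi μ T t : ℂ))) ≤
      ENNReal.ofReal (72 * (2 * V.card + 1) * Real.log |lam|) := by
  classical
  have hlog : 0 ≤ Real.log |lam| := Real.log_nonneg (by linarith)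
  refine (PL_bound (genPhi μ T) (genPhi_continuous μ hT) ?_ (V ∪ V.image (fun x => x + π)) ?_ lam
    hlam).trans (ENNReal.ofReal_le_ofReal ?_)
  · have := genPhi_two_pi μ T 0
    rwa [zero_add] at this
  · intro a b ha hab hb hF
    refine ⟨(genPhi μ T b - genPhi μ T a) / (b - a), ?_, fun t ht => ?_⟩
    · rw [abs_div, div_le_one (abs_pos.2 (by linarith))]
      refine (genPhi_lip μ hT b a).trans ?_
      exact mul_le_of_le_one_left (abs_nonneg _) hμ
    · have h1 : ∫ ω, (b - a) * (triW (t - T ω) - triW (a - T ω)) ∂μ =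
          ∫ ω, (t - a) * (triW (b - T ω) - triW (a - T ω)) ∂μ := by
        congr 1; ext ω
        refine triW_affine (hT0 ω) (hT1 ω) ha hab hb ?_ ?_ t ht
        · exact hF _ (Finset.mem_union_left _ (hV ω))
        · exact hF _ (Finset.mem_union_right _ (Finset.mem_image_of_mem _ (hV ω)))
      rw [integral_const_mul, integral_const_mul,
        integral_sub (triW_int μ hT t) (triW_int μ hT a),
        integral_sub (triW_int μ hT b) (triW_int μ hT a)] at h1
      change (b - a) * (genPhi μ T t - genPhi μ T a) = (t - a) * (genPhi μ T b - genPhi μ T a) at h1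
      have : b - a ≠ 0 := by linarith
      field_simp
      linarith
  · have : ((V ∪ V.image (fun x => x + π)).card : ℝ) ≤ 2 * V.card := by
      have h1 := Finset.card_union_le V (V.image (fun x => x + π))
      have h2 := Finset.card_image_le (s := V) (f := fun x => x + π)
      have : (V ∪ V.image (fun x => x + π)).card ≤ 2 * V.card := by omega
      exact_mod_cast this
    gcongr

end pl

/-- a dense sequence in the open unit interval -/
lemma exists_dense_seq : ∃ r : ℕ → ℝ, (∀ m, 0 < r m) ∧ (∀ m, r m < 1) ∧
    ∀ u v : ℝ, 0 ≤ u → u < v → v ≤ 1 → ∃ m, u < r m ∧ r m < v := by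
  have : Nonempty (Ioo (0:ℝ) 1) := ⟨⟨1/2, by norm_num, by norm_num⟩⟩
  refine ⟨fun m => (TopologicalSpace.denseSeq (Ioo (0:ℝ) 1) m : ℝ), fun m => (Subtype.prop _ : _ ∈ Ioo (0:ℝ) 1).1,
    fun m => (Subtype.prop _ : _ ∈ Ioo (0:ℝ) 1).2, fun u v hu huv hv => ?_⟩
  have hd := TopologicalSpace.denseRange_denseSeq (Ioo (0:ℝ) 1)
  have ho : IsOpen ((fun x : Ioo (0:ℝ) 1 => (x:ℝ)) ⁻¹' Ioo u v) :=
    isOpen_Ioo.preimage continuous_subtype_val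
  obtain ⟨m, hm⟩ := hd.exists_mem_open ho
    ⟨⟨(u + v) / 2, by linarith, by linarith⟩, by simp only [mem_preimage, mem_Ioo]; constructor <;> linarith⟩
  exact ⟨m, hm.1, hm.2⟩

/-- jump function -/
noncomputable def jumpS (r e : ℕ → ℝ) (s : ℝ) : ℝ := ∑' j, e j * (if r j < s then 1 else 0)

/-- partial jump function -/
noncomputable def jumpSN (r e : ℕ → ℝ) (N : ℕ) (s : ℝ) : ℝ :=
  ∑ j ∈ Finset.range N, e j * (if r j < s then 1 else 0)

section jump
variable {r e : ℕ → ℝ}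

lemma jump_summable (he : ∀ j, 0 < e j) (hs : Summable e) (s : ℝ) :
    Summable fun j => e j * (if r j < s then (1:ℝ) else 0) := by
  refine Summable.of_nonneg_of_le (fun j => ?_) (fun j => ?_) hs
  · have := (he j).le; split_ifs <;> simp [this]
  · have := (he j).le; split_ifs <;> simp [this]

lemma jumpS_mono (he : ∀ j, 0 < e j) (hs : Summable e) : Monotone (jumpS r e) := by
  intro s s' h
  refine Summable.tsum_le_tsum (fun j => ?_) (jump_summable he hs s) (jump_summable he hs s')
  have := (he j).le
  split_ifs <;> simp [this]
  linarith

lemma jumpS_strict (he : ∀ j, 0 < e j) (hs : Summable e)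
    (hr : ∀ u v : ℝ, 0 ≤ u → u < v → v ≤ 1 → ∃ m, u < r m ∧ r m < v) {s s' : ℝ}
    (h0 : 0 ≤ s) (h : s < s') (h1 : s' ≤ 1) : jumpS r e s < jumpS r e s' := by
  obtain ⟨m, hm1, hm2⟩ := hr s s' h0 h h1
  refine Summable.tsum_lt_tsum (i := m) (fun j => ?_) ?_ (jump_summable he hs s) (jump_summable he hs s')
  · have := (he j).le
    split_ifs <;> simp [this]
    linarith
  · rw [if_neg (by linarith), if_pos hm2]; simp [he m]

lemma jumpS_nonneg (he : ∀ j, 0 < e j) (s : ℝ) : 0 ≤ jumpS r e s :=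
  tsum_nonneg fun j => by have := (he j).le; split_ifs <;> simp [this]

lemma jumpSN_nonneg (he : ∀ j, 0 < e j) (N : ℕ) (s : ℝ) : 0 ≤ jumpSN r e N s :=
  Finset.sum_nonneg fun j _ => by have := (he j).le; split_ifs <;> simp [this]

lemma jumpS_le (he : ∀ j, 0 < e j) (hs : Summable e) (s : ℝ) : jumpS r e s ≤ ∑' j, e j := by
  refine Summable.tsum_le_tsum (fun j => ?_) (jump_summable he hs s) hs
  have := (he j).le; split_ifs <;> simp [this]

lemma jumpS_split (he : ∀ j, 0 < e j) (hs : Summable e) (N : ℕ) (s : ℝ) :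
    jumpSN r e N s ≤ jumpS r e s ∧ jumpS r e s ≤ jumpSN r e N s + ∑' j, e (j + N) := by
  have h := (jump_summable (r := r) he hs s).sum_add_tsum_nat_add N
  have h1 : 0 ≤ ∑' j, e (j + N) * (if r (j + N) < s then (1:ℝ) else 0) :=
    tsum_nonneg fun j => by have := (he (j + N)).le; split_ifs <;> simp [this]
  have h2 : ∑' j, e (j + N) * (if r (j + N) < s then (1:ℝ) else 0) ≤ ∑' j, e (j + N) := by
    refine Summable.tsum_le_tsum (fun j => ?_) ((summable_nat_add_iff N).2 (jump_summable he hs s))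
      ((summable_nat_add_iff N).2 hs)
    have := (he (j + N)).le; split_ifs <;> simp [this]
  unfold jumpS jumpSN
  constructor <;> linarith

lemma jumpSN_measurable (N : ℕ) : Measurable (jumpSN r e N) := by
  unfold jumpSN
  refine Finset.measurable_sum _ fun j _ => ?_
  refine measurable_const.mul (Measurable.ite measurableSet_Ioi measurable_const measurable_const)

lemma jumpSN_values (N : ℕ) (s : ℝ) :
    jumpSN r e N s ∈ (Finset.range N).powerset.image (fun A => ∑ j ∈ A, e j) := by
  classical
  rw [Finset.mem_image]
  refine ⟨(Finset.range N).filter (fun j => r j < s), by simp, ?_⟩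
  unfold jumpSN
  rw [Finset.sum_filter]
  simp

lemma jumpS_small (he : ∀ j, 0 < e j) (hs : Summable e) (hr0 : ∀ m, 0 < r m) {ε : ℝ} (hε : 0 < ε) :
    ∃ s0, 0 < s0 ∧ s0 ≤ 1 ∧ ∀ s, s < s0 → jumpS r e s < ε := by
  have ht := tendsto_sum_nat_add e
  obtain ⟨N, hN⟩ := (ht.eventually (gt_mem_nhds hε)).exists
  have hex : ∃ s0, 0 < s0 ∧ s0 ≤ 1 ∧ ∀ j ∈ Finset.range N, s0 ≤ r j := by
    clear hN
    induction N with
    | zero => exact ⟨1, by norm_num, le_rfl, by simp⟩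
    | succ N ih =>
      obtain ⟨s0, h1, h2, h3⟩ := ih
      refine ⟨min s0 (r N), lt_min h1 (hr0 N), (min_le_left _ _).trans h2, fun j hj => ?_⟩
      rw [Finset.range_add_one, Finset.mem_insert] at hj
      rcases hj with rfl | hj
      · exact min_le_right _ _
      · exact (min_le_left _ _).trans (h3 j hj)
  obtain ⟨s0, h1, h2, h3⟩ := hex
  refine ⟨s0, h1, h2, fun s hs' => ?_⟩
  have hz : jumpSN r e N s = 0 := by
    unfold jumpSN
    refine Finset.sum_eq_zero fun j hj => ?_
    rw [if_neg (by linarith [h3 j hj]), mul_zero]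
  have := (jumpS_split (r := r) he hs N s).2
  linarith

end jump

lemma tsum_shift_indicator (f : ℕ → ℝ≥0∞) (N : ℕ) :
    ∑' m, f m * ({m | N ≤ m} : Set ℕ).indicator 1 m = ∑' m, f (m + N) := by
  rw [← (add_left_injective N).tsum_eq]
  · refine tsum_congr fun m => ?_
    simp
  · intro m hm
    by_cases h : N ≤ m
    · exact ⟨m - N, Nat.sub_add_cancel h⟩
    · exact absurd (by simp [h]) hm

set_option maxHeartbeats 1000000 in
/-- The construction. -/
lemma exists_construction (ε : ℕ → ℝ) (hε0 : ∀ N, 0 < ε N) (hε1 : ∀ N, ε N ≤ 1) (hεa : Antitone ε) :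
    ∃ (μ : Measure (ℕ × ℝ)) (T : ℕ × ℝ → ℝ), IsFiniteMeasure μ ∧ μ.real univ ≤ 1 ∧ Measurable T ∧
      (∀ ω, 0 ≤ T ω) ∧ (∀ ω, T ω ≤ π) ∧ (∀ a, μ {ω | T ω = a} = 0) ∧
      (∀ u v, 0 ≤ u → u < v → v ≤ π → 0 < μ {ω | T ω ∈ Ioo u v}) ∧
      ∀ N : ℕ, ∃ (T' : ℕ × ℝ → ℝ) (E : Set (ℕ × ℝ)) (V : Finset ℝ), Measurable T' ∧
        (∀ ω, 0 ≤ T' ω) ∧ (∀ ω, T' ω ≤ π) ∧ (∀ ω, T' ω ∈ V) ∧ V.card ≤ N * 2 ^ N + 1 ∧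
        MeasurableSet E ∧ μ.real E ≤ ε N ∧ ∀ ω, ω ∉ E → |T ω - T' ω| ≤ ε N := by
  classical
  have hpi := Real.pi_pos
  obtain ⟨r, hr0, hr1, hr⟩ := exists_dense_seq
  set e : ℕ → ℝ := fun j => (ε j / 4) * (1 / 2 / 2 ^ j) with he_def
  have he : ∀ j, 0 < e j := fun j => by have := hε0 j; positivity
  have hgeo : HasSum (fun j : ℕ => (1:ℝ) / 2 / 2 ^ j) 1 := hasSum_geometric_two' 1
  have hs : Summable e := by
    refine Summable.of_nonneg_of_le (fun j => (he j).le) (fun j => ?_) hgeo.summable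
    have := hε1 j
    exact mul_le_of_le_one_left (by positivity) (by linarith)
  have htail : ∀ N, ∑' j, e (j + N) ≤ ε N / 4 := by
    intro N
    have h1 : ∑' j, e (j + N) ≤ ∑' j : ℕ, (ε N / 4) * (1 / 2 / 2 ^ j) := by
      refine Summable.tsum_le_tsum (fun j => ?_) ((summable_nat_add_iff N).2 hs)
        (hgeo.summable.mul_left _)
      have h2 := hεa (Nat.le_add_left N j)
      have h3 : (2:ℝ) ^ j ≤ 2 ^ (j + N) := pow_le_pow_right₀ (by norm_num) (Nat.le_add_right _ _)
      have h4 := hε0 N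
      simp only [he_def]
      gcongr
    rwa [tsum_mul_left, hgeo.tsum_eq, mul_one] at h1
  have htot : ∑' j, e j ≤ 1 := by
    have := htail 0
    simp only [add_zero] at this
    linarith [hε1 0]
  have hε4 : ∀ N, ε N / 4 ≤ ε N := fun N => by linarith [hε0 N]
  set S := jumpS r e with hS
  have hS0 : ∀ s, 0 ≤ S s := jumpS_nonneg he
  have hS1 : ∀ s, S s ≤ 1 := fun s => (jumpS_le he hs s).trans htot
  have hSm : Measurable S := (jumpS_mono he hs).measurable
  set ν : Measure ℕ := Measure.sum (fun m => ENNReal.ofReal (e m) • Measure.dirac m) with hν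
  have hνA : ∀ A : Set ℕ, ν A = ∑' m, ENNReal.ofReal (e m) * A.indicator 1 m := by
    intro A
    rw [hν, Measure.sum_apply _ (MeasurableSet.of_discrete)]
    simp
  have hνu : ν univ ≤ 1 := by
    rw [hνA]
    simp only [indicator_univ, Pi.one_apply, mul_one]
    rw [← ENNReal.ofReal_tsum_of_nonneg (fun j => (he j).le) hs]
    exact ENNReal.ofReal_le_one.2 htot
  have : IsFiniteMeasure ν := ⟨lt_of_le_of_lt hνu ENNReal.one_lt_top⟩
  set vol : Measure ℝ := volume.restrict (Ioo 0 1) with hvol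
  have hvu : vol univ = 1 := by rw [hvol]; simp
  have : IsFiniteMeasure vol := ⟨by rw [hvu]; exact ENNReal.one_lt_top⟩
  set μ := ν.prod vol with hμ
  have hμprod : ∀ (A : Set ℕ), μ (A ×ˢ univ) = ν A := by
    intro A; rw [hμ, Measure.prod_prod, hvu, mul_one]
  set T : ℕ × ℝ → ℝ := fun ω => π * (r ω.1 + (1 - r ω.1) * S ω.2) with hTdef
  have hrm : Measurable fun ω : ℕ × ℝ => r ω.1 := (measurable_of_countable r).comp measurable_fst
  have hT : Measurable T :=
    measurable_const.mul (hrm.add ((measurable_const.sub hrm).mul (hSm.comp measurable_snd)))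
  have hran : ∀ m (x : ℝ), 0 ≤ x → x ≤ 1 → 0 ≤ π * (r m + (1 - r m) * x) ∧
      π * (r m + (1 - r m) * x) ≤ π := by
    intro m x h0 h1
    have a1 := hr0 m
    have a2 : 0 < 1 - r m := by linarith [hr1 m]
    refine ⟨by positivity, mul_le_of_le_one_right hpi.le ?_⟩
    nlinarith
  refine ⟨μ, T, inferInstance, ?_, hT, fun ω => (hran _ _ (hS0 _) (hS1 _)).1,
    fun ω => (hran _ _ (hS0 _) (hS1 _)).2, ?_, ?_, ?_⟩
  · have : μ univ ≤ 1 := by rw [← univ_prod_univ, hμprod]; exact hνu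
    exact ENNReal.toReal_le_of_le_ofReal zero_le_one (by simpa using this)
  · intro a
    have hms : MeasurableSet {ω | T ω = a} := hT (measurableSet_singleton a)
    rw [hμ, Measure.measure_prod_null hms]
    refine ae_of_all _ fun m => ?_
    simp only [Pi.zero_apply]
    rw [hvol, Measure.restrict_apply' measurableSet_Ioo]
    refine Set.Subsingleton.measure_zero ?_ _
    rintro s ⟨hs1, hs2⟩ s' ⟨hs1', hs2'⟩
    have e1 : π * (r m + (1 - r m) * S s) = a := hs1
    have e2 : π * (r m + (1 - r m) * S s') = a := hs1'
    have e3 : S s = S s' := by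
      rw [← e2] at e1
      have e4 := mul_left_cancel₀ hpi.ne' e1
      have e5 := add_left_cancel e4
      exact mul_left_cancel₀ (by linarith [hr1 m]) e5
    rcases lt_trichotomy s s' with h | h | h
    · exact absurd e3 (jumpS_strict he hs hr hs2.1.le h hs2'.2.le).ne
    · exact h
    · exact absurd e3 (jumpS_strict he hs hr hs2'.1.le h hs2.2.le).ne'
  · intro u v hu huv hv
    obtain ⟨m, hm1, hm2⟩ := hr (u / π) (v / π) (by positivity) (by gcongr)
      (by rw [div_le_one hpi]; exact hv)
    rw [div_lt_iff₀ hpi] at hm1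
    rw [lt_div_iff₀ hpi] at hm2
    obtain ⟨s0, h1, h2, h3⟩ := jumpS_small (r := r) he hs hr0 (ε := (v - r m * π) / π)
      (div_pos (by linarith) hpi)
    have hsub : ({m} : Set ℕ) ×ˢ Ioo 0 s0 ⊆ {ω | T ω ∈ Ioo u v} := by
      rintro ⟨m', s⟩ ⟨hm', hs'⟩
      simp only [mem_singleton_iff] at hm'
      subst hm'
      have h4 := h3 s hs'.2
      rw [lt_div_iff₀ hpi] at h4
      have h5 := hS0 s
      have h6 := hr0 m'
      have h7 := hr1 m'
      have h8 : 0 ≤ (1 - r m') * S s * π := mul_nonneg (mul_nonneg (by linarith) h5) hpi.le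
      have h9 : (1 - r m') * S s * π ≤ S s * π := by
        gcongr; exact mul_le_of_le_one_left h5 (by linarith)
      have h10 : S s * π < v - r m' * π := h4
      change π * (r m' + (1 - r m') * S s) ∈ Ioo u v
      constructor <;> nlinarith
    refine lt_of_lt_of_le ?_ (measure_mono hsub)
    rw [hμ, Measure.prod_prod]
    refine ENNReal.mul_pos ?_ ?_
    · rw [hνA]
      have : ENNReal.ofReal (e m) ≤ ∑' m', ENNReal.ofReal (e m') * ({m} : Set ℕ).indicator 1 m' := by
        refine le_trans ?_ (ENNReal.le_tsum m)
        simp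
      exact (lt_of_lt_of_le (ENNReal.ofReal_pos.2 (he m)) this).ne'
    · rw [hvol, Measure.restrict_apply measurableSet_Ioo, Ioo_inter_Ioo]
      simp [h1]
  · intro N
    set SN := jumpSN r e N with hSN
    have hsp := jumpS_split (r := r) he hs N
    have hSN0 : ∀ s, 0 ≤ SN s := jumpSN_nonneg he N
    have hSN1 : ∀ s, SN s ≤ 1 := fun s => (hsp s).1.trans (hS1 s)
    have hmN : MeasurableSet {ω : ℕ × ℝ | ω.1 < N} :=
      measurable_fst (MeasurableSet.of_discrete (s := {m : ℕ | m < N}))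
    refine ⟨fun ω => if ω.1 < N then π * (r ω.1 + (1 - r ω.1) * SN ω.2) else 0,
      {m | N ≤ m} ×ˢ univ,
      insert 0 ((Finset.range N ×ˢ (Finset.range N).powerset).image
        (fun p => π * (r p.1 + (1 - r p.1) * ∑ j ∈ p.2, e j))), ?_, ?_, ?_, ?_, ?_, ?_, ?_, ?_⟩
    · refine Measurable.ite hmN ?_ measurable_const
      exact measurable_const.mul (hrm.add ((measurable_const.sub hrm).mul
        ((jumpSN_measurable N).comp measurable_snd)))
    · intro ω
      beta_reduce
      split_ifs
      · exact (hran _ _ (hSN0 _) (hSN1 _)).1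
      · exact le_rfl
    · intro ω
      beta_reduce
      split_ifs
      · exact (hran _ _ (hSN0 _) (hSN1 _)).2
      · exact hpi.le
    · intro ω
      beta_reduce
      split_ifs with h
      · refine Finset.mem_insert_of_mem (Finset.mem_image.2 ?_)
        obtain ⟨A, hA, hA2⟩ := Finset.mem_image.1 (jumpSN_values (r := r) (e := e) N ω.2)
        exact ⟨(ω.1, A), Finset.mem_product.2 ⟨Finset.mem_range.2 h, hA⟩, by
          simp only at hA2 ⊢
          rw [hA2]⟩
      · exact Finset.mem_insert_self _ _
    · refine (Finset.card_insert_le _ _).trans (Nat.add_le_add_right ?_ 1)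
      refine Finset.card_image_le.trans ?_
      simp
    · exact (MeasurableSet.of_discrete).prod MeasurableSet.univ
    · have h1 : μ ({m | N ≤ m} ×ˢ univ) ≤ ENNReal.ofReal (ε N / 4) := by
        rw [hμprod, hνA]
        have h2 : ∑' m, ENNReal.ofReal (e m) * ({m | N ≤ m} : Set ℕ).indicator 1 m =
            ∑' m, ENNReal.ofReal (e (m + N)) := by
          exact tsum_shift_indicator (fun m => ENNReal.ofReal (e m)) N
        rw [h2, ← ENNReal.ofReal_tsum_of_nonneg (fun j => (he _).le) ((summable_nat_add_iff N).2 hs)]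
        exact ENNReal.ofReal_le_ofReal (htail N)
      exact ENNReal.toReal_le_of_le_ofReal (hε0 N).le
        (h1.trans (ENNReal.ofReal_le_ofReal (hε4 N)))
    · rintro ⟨m, s⟩ hω
      have hm : m < N := by
        by_contra h
        exact hω ⟨not_lt.1 h, mem_univ _⟩
      simp only [hTdef, if_pos hm]
      have e1 : π * (r m + (1 - r m) * S s) - π * (r m + (1 - r m) * SN s) =
          (1 - r m) * (π * (S s - SN s)) := by ring
      have h1 := (hsp s).1
      have h2 := (hsp s).2
      have h3 := htail N
      have h4 : 0 ≤ S s - SN s := by linarith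
      have h5 : S s - SN s ≤ ε N / 4 := by linarith
      have h6 := hr0 m
      have h7 := hr1 m
      rw [e1, abs_of_nonneg (mul_nonneg (by linarith) (by positivity))]
      calc (1 - r m) * (π * (S s - SN s)) ≤ π * (S s - SN s) :=
            mul_le_of_le_one_left (by positivity) (by linarith)
        _ ≤ 4 * (ε N / 4) := by gcongr; exact Real.pi_le_four
        _ = ε N := by ring

/-- Corollary 3: for any γ ≥ 0 with γ(λ) → +∞, there exists a nowhere
linear real φ ∈ C¹(𝕋) with ‖e^{iλφ}‖_A = O(γ(|λ|)·log |λ|). -/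
theorem statement5
    (γ : ℝ → ℝ) (hγ_nonneg : ∀ x : ℝ, 0 ≤ γ x)
    (hγ_tendsto : Filter.Tendsto γ Filter.atTop Filter.atTop) :
    ∃ φ : ℝ → ℝ,
      (∀ t : ℝ, φ (t + 2 * Real.pi) = φ t) ∧
      ContDiff ℝ 1 φ ∧
      -- φ is nowhere linear
      (∀ u v : ℝ, u < v → ¬ ∃ a b : ℝ, ∀ t ∈ Ioo u v, φ t = a * t + b) ∧
      (∃ C : ℝ, 0 < C ∧ ∃ Λ : ℝ, 2 ≤ Λ ∧ ∀ lam : ℝ, Λ ≤ |lam| →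
        ApNorm 1 (fun t => Complex.exp (Complex.I * (lam : ℂ) * (φ t : ℂ))) ≤
          ENNReal.ofReal (C * γ |lam| * Real.log |lam|)) := by
  have hA : ∀ N : ℕ, ∃ a : ℝ, ∀ x, a ≤ x → (2 * ((N * 2 ^ N + 1 : ℕ) : ℝ) + 1) ≤ γ x := fun N =>
    Filter.eventually_atTop.1 (hγ_tendsto.eventually_ge_atTop _)
  choose a ha using hA
  set L : ℕ → ℝ := fun N => 2 + N + ∑ i ∈ Finset.range (N + 1), |a i| with hL
  have hLm : Monotone L := by
    refine monotone_nat_of_le_succ fun N => ?_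
    simp only [hL]
    rw [Finset.sum_range_succ _ (N + 1)]
    push_cast
    linarith [abs_nonneg (a (N + 1))]
  have hs0 : ∀ N : ℕ, 0 ≤ ∑ i ∈ Finset.range (N + 1), |a i| := fun N =>
    Finset.sum_nonneg fun i _ => abs_nonneg _
  have hL2 : ∀ N, 2 ≤ L N := fun N => by
    have := hs0 N
    simp only [hL]
    have : (0:ℝ) ≤ N := Nat.cast_nonneg N
    linarith
  have hLN : ∀ N : ℕ, (N : ℝ) < L N := fun N => by
    have := hs0 N
    simp only [hL]
    linarith
  have hLa : ∀ N, a N ≤ L N := fun N => by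
    have h1 : |a N| ≤ ∑ i ∈ Finset.range (N + 1), |a i| :=
      Finset.single_le_sum (f := fun i => |a i|) (fun i _ => abs_nonneg _) (Finset.self_mem_range_succ N)
    have h2 := le_abs_self (a N)
    have : (0:ℝ) ≤ N := Nat.cast_nonneg N
    simp only [hL]
    linarith
  set ε : ℕ → ℝ := fun N => (1 / L (N + 1)) ^ 2 with hε
  have hinv : ∀ N, 0 < 1 / L N := fun N => by have := hL2 N; positivity
  have hε0 : ∀ N, 0 < ε N := fun N => pow_pos (hinv _) 2
  have hε1 : ∀ N, ε N ≤ 1 := fun N => by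
    refine pow_le_one₀ (hinv _).le ?_
    have := hL2 (N + 1)
    rw [div_le_one (by linarith)]
    linarith
  have hεa : Antitone ε := fun m n hmn => by
    have h1 := hLm (Nat.succ_le_succ hmn)
    have h2 := hL2 (m + 1)
    exact pow_le_pow_left₀ (hinv _).le (one_div_le_one_div_of_le (by linarith) h1) 2
  obtain ⟨μ, T, hfin, hμ, hT, hT0, hT1, hna, hsupp, hap⟩ := exists_construction ε hε0 hε1 hεa
  set C1 : ℝ := ∑' j : ℕ, 32 / π * (1 / ((2 * j + 1 : ℕ):ℝ) ^ (3/2 : ℝ)) with hC1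
  have hC10 : 0 ≤ C1 := tsum_nonneg fun j => by have := Real.pi_pos; positivity
  refine ⟨genPhi μ T, genPhi_two_pi μ T, genPhi_contDiff μ hT hna,
    fun u v huv => genPhi_not_affine μ hT hT0 hT1 hsupp u v huv,
    72 * Real.exp C1, by positivity, L 0, hL2 0, fun lam hlam => ?_⟩
  have hex : ∃ N, |lam| < L (N + 1) := by
    obtain ⟨n, hn⟩ := exists_nat_gt |lam|
    exact ⟨n, hn.trans ((hLN n).trans_le (hLm (Nat.le_succ n)))⟩
  classical
  obtain ⟨N, hN1, hN2⟩ : ∃ N, L N ≤ |lam| ∧ |lam| < L (N + 1) := by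
    refine ⟨Nat.find hex, ?_, Nat.find_spec hex⟩
    rcases Nat.eq_zero_or_pos (Nat.find hex) with h | h
    · rw [h]; exact hlam
    · have h1 := Nat.find_min hex (Nat.sub_lt h one_pos)
      rw [show Nat.find hex - 1 + 1 = Nat.find hex by omega] at h1
      exact not_lt.1 h1
  obtain ⟨T', E, V, hT', hT'0, hT'1, hV, hVc, hE, hμE, hTE⟩ := hap N
  have hlam2 : 2 ≤ |lam| := (hL2 N).trans hN1
  have hγN := ha N |lam| ((hLa N).trans hN1)
  have hpert := pert_amult μ hμ hT hT' hE (hε0 N).le (hε1 N) hμE hTE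
  have hsq : √(ε N) = 1 / L (N + 1) := Real.sqrt_sq (hinv _).le
  rw [hsq, ← hC1] at hpert
  have hm := ((hpert.const_mul (Complex.I * lam)).mono (B' := C1) (by
    have h1 : ‖Complex.I * (lam : ℂ)‖ = |lam| := by simp
    rw [h1]
    have h2 : |lam| * (1 / L (N + 1)) ≤ 1 := by
      rw [mul_one_div, div_le_one (by linarith [hL2 (N + 1)])]
      exact hN2.le
    calc |lam| * (C1 * (1 / L (N + 1))) = C1 * (|lam| * (1 / L (N + 1))) := by ring
      _ ≤ C1 * 1 := by gcongr
      _ = C1 := mul_one _)).exp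
  have hcont : Continuous fun t => Complex.exp (Complex.I * (lam : ℂ) * (genPhi μ T' t : ℂ)) := by
    have := genPhi_continuous μ hT'
    fun_prop
  have hmul := hm.mult _ hcont
  have hfun : (fun t => Complex.exp (Complex.I * (lam : ℂ) * (genPhi μ T t : ℂ))) =
      fun t => Complex.exp (Complex.I * (lam : ℂ) * (genPhi μ T' t : ℂ)) *
        Complex.exp (Complex.I * lam * ((genPhi μ T t - genPhi μ T' t : ℝ) : ℂ)) := by
    ext t
    rw [← Complex.exp_add]
    congr 1
    push_cast
    ring
  rw [hfun]
  refine hmul.trans ?_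
  refine (mul_le_mul_right (genPhi_PL_bound μ hμ hT' hT'0 hT'1 V hV lam hlam2) _).trans ?_
  rw [← ENNReal.ofReal_mul (Real.exp_pos _).le]
  refine ENNReal.ofReal_le_ofReal ?_
  have hlog : 0 ≤ Real.log |lam| := Real.log_nonneg (by linarith)
  have hVc' : (V.card : ℝ) ≤ ((N * 2 ^ N + 1 : ℕ) : ℝ) := by exact_mod_cast hVc
  have hle : 2 * (V.card : ℝ) + 1 ≤ γ |lam| := by linarith
  calc Real.exp C1 * (72 * (2 * V.card + 1) * Real.log |lam|)
      = 72 * Real.exp C1 * (2 * V.card + 1) * Real.log |lam| := by ring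
    _ ≤ 72 * Real.exp C1 * γ |lam| * Real.log |lam| := by gcongr
end

section
/- Let φ be a real-valued, non-constant, 2π-periodic C¹ function with ω(φ′,δ) ≤ c·ω(δ) for all δ ≥ 0, where c > 0 is fixed. Let m = min_{[0,2π]} φ′ and M = max_{[0,2π]} φ′ (so m < M). For λ > 0 define δ_λ > 0 by χ(2δ_λ) = 1/(2cλ), where χ(δ) = δ·ω(δ). Then for all sufficiently large λ > 0 and every integer k with mλ < k < Mλ, there exists an interval I ⊆ [0,2π] with |I| = 2δ_λ such that |(Δ_I · e^{iλφ})^∧(k)| ≥ δ_λ/(4π), where Δ_I is the triangle function supported on I. -/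
open MeasureTheory Real Set
open scoped ENNReal

/-- The triangle function supported on the interval [a,b]: value 1 at the center,
decreasing linearly to 0 at the endpoints. -/
noncomputable def triangleFun (a b : ℝ) (t : ℝ) : ℝ :=
  max (1 - |t - (a + b) / 2| / ((b - a) / 2)) 0

lemma triangleFun_nonneg (a b t : ℝ) : 0 ≤ triangleFun a b t := le_max_right _ _

lemma triangleFun_continuous (a b : ℝ) : Continuous (triangleFun a b) := by
  unfold triangleFun
  fun_prop

lemma triangleFun_eq_zero (a δ t : ℝ) (hδ : 0 < δ) (ht : t ∉ Icc a (a + 2 * δ)) :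
    triangleFun a (a + 2 * δ) t = 0 := by
  unfold triangleFun
  apply max_eq_right
  have e1 : (a + (a + 2 * δ)) / 2 = a + δ := by ring
  have e2 : (a + 2 * δ - a) / 2 = δ := by ring
  rw [e1, e2, sub_nonpos, le_div_iff₀ hδ, one_mul, le_abs]
  by_contra h
  push Not at h
  exact ht ⟨by linarith [h.2], by linarith [h.1]⟩

lemma triangleFun_integral (a δ : ℝ) (hδ : 0 < δ) :
    ∫ t in a..(a + 2 * δ), triangleFun a (a + 2 * δ) t = δ := by
  have e1 : (a + (a + 2 * δ)) / 2 = a + δ := by ring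
  have e2 : (a + 2 * δ - a) / 2 = δ := by ring
  have hI : ∀ x y, IntervalIntegrable (triangleFun a (a + 2 * δ)) volume x y := fun x y =>
    (triangleFun_continuous _ _).intervalIntegrable _ _
  rw [← intervalIntegral.integral_add_adjacent_intervals (hI a (a + δ)) (hI (a + δ) _)]
  have h1 : ∫ t in a..(a + δ), triangleFun a (a + 2 * δ) t = ∫ t in a..(a + δ), (t - a) / δ := by
    apply intervalIntegral.integral_congr
    intro t ht
    rw [uIcc_of_le (by linarith)] at ht
    simp only [triangleFun]
    rw [e1, e2, abs_of_nonpos (by linarith [ht.2]), max_eq_left]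
    · field_simp; ring
    · rw [sub_nonneg, div_le_one hδ]; linarith [ht.1]
  have h2 : ∫ t in (a + δ)..(a + 2 * δ), triangleFun a (a + 2 * δ) t
      = ∫ t in (a + δ)..(a + 2 * δ), (a + 2 * δ - t) / δ := by
    apply intervalIntegral.integral_congr
    intro t ht
    rw [uIcc_of_le (by linarith)] at ht
    simp only [triangleFun]
    rw [e1, e2, abs_of_nonneg (by linarith [ht.1]), max_eq_left]
    · field_simp; ring
    · rw [sub_nonneg, div_le_one hδ]; linarith [ht.2]
  rw [h1, h2, intervalIntegral.integral_div, intervalIntegral.integral_div,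
    intervalIntegral.integral_sub (by simp) (by simp),
    intervalIntegral.integral_sub (by simp) (by simp)]
  simp only [integral_id, intervalIntegral.integral_const, smul_eq_mul]
  field_simp
  ring

/-- Lemma 1: for large λ and each integer k with mλ < k < Mλ there is an
interval I ⊆ [0,2π] of length 2δ_λ with |(Δ_I e^{iλφ})^∧(k)| ≥ δ_λ/(4π). -/
theorem statement6
    -- ω is a modulus of continuity
    (ω : ℝ → ℝ)
    (hω_cont : ContinuousOn ω (Ici 0)) (hω_mono : MonotoneOn ω (Ici 0))
    (hω_zero : ω 0 = 0) (hω_pos : ∀ δ : ℝ, 0 < δ → 0 < ω δ)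
    (hχ_mono : StrictMonoOn (fun δ => δ * ω δ) (Ici 0))
    (hχ_unbdd : ∀ y : ℝ, ∃ δ : ℝ, 0 ≤ δ ∧ y < δ * ω δ)
    (c : ℝ) (hc : 0 < c)
    (φ : ℝ → ℝ)
    (hφ_per : ∀ t : ℝ, φ (t + 2 * Real.pi) = φ t)
    (hφ_C1 : ContDiff ℝ 1 φ)
    (hφ_mod : ∀ δ : ℝ, 0 ≤ δ → ∀ s t : ℝ, |s - t| ≤ δ → |deriv φ s - deriv φ t| ≤ c * ω δ)
    (hφ_nonconst : ∃ s t : ℝ, φ s ≠ φ t)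
    (m M : ℝ)
    (hm : IsLeast (deriv φ '' Icc 0 (2 * Real.pi)) m)
    (hM : IsGreatest (deriv φ '' Icc 0 (2 * Real.pi)) M)
    -- δ_λ > 0 is defined by χ(2δ_λ) = 1/(2cλ)
    (δfun : ℝ → ℝ)
    (hδ : ∀ lam : ℝ, 0 < lam → 0 < δfun lam ∧
      (2 * δfun lam) * ω (2 * δfun lam) = 1 / (2 * c * lam)) :
    ∃ Λ : ℝ, 0 < Λ ∧ ∀ lam : ℝ, Λ ≤ lam → ∀ k : ℤ,
      m * lam < (k : ℝ) → (k : ℝ) < M * lam →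
      ∃ a b : ℝ, 0 ≤ a ∧ a ≤ b ∧ b ≤ 2 * Real.pi ∧ b - a = 2 * δfun lam ∧
        δfun lam / (4 * Real.pi) ≤
          ‖fourierCoef (fun t => (triangleFun a b t : ℂ) *
            Complex.exp (Complex.I * (lam : ℂ) * (φ t : ℂ))) k‖ := by
  have hπ := Real.pi_pos
  have hχpos : 0 < 2 * Real.pi * ω (2 * Real.pi) :=
    mul_pos (by positivity) (hω_pos _ (by positivity))
  refine ⟨1 / (2 * c * (2 * Real.pi * ω (2 * Real.pi))), by positivity, ?_⟩
  intro lam hlam k hk1 hk2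
  have hlam0 : 0 < lam := lt_of_lt_of_le (by positivity) hlam
  obtain ⟨hd, hχ⟩ := hδ lam hlam0
  set δ := δfun lam with hδdef
  have hδπ : 2 * δ ≤ 2 * Real.pi := by
    by_contra h
    push Not at h
    have h1 := hχ_mono (show (2 * Real.pi) ∈ Ici (0:ℝ) from by simp; positivity)
      (show (2 * δ) ∈ Ici (0:ℝ) from by simp; positivity) h
    simp only at h1
    rw [hχ, lt_div_iff₀ (by positivity)] at h1
    rw [div_le_iff₀ (by positivity)] at hlam
    nlinarith
  have hdc : Continuous (deriv φ) := hφ_C1.continuous_deriv le_rfl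
  have hdiff : Differentiable ℝ φ := hφ_C1.differentiable one_ne_zero
  have hord : (deriv φ '' Icc 0 (2 * Real.pi)).OrdConnected :=
    (isPreconnected_Icc.image _ hdc.continuousOn).ordConnected
  obtain ⟨t0, ht0, ht0k⟩ : (k : ℝ) / lam ∈ deriv φ '' Icc 0 (2 * Real.pi) :=
    hord.out hm.1 hM.1 ⟨by rw [le_div_iff₀ hlam0]; exact hk1.le,
      by rw [div_le_iff₀ hlam0]; exact hk2.le⟩
  obtain ⟨a, ha0, hat, hta, hab⟩ : ∃ a : ℝ, 0 ≤ a ∧ a ≤ t0 ∧ t0 ≤ a + 2 * δ ∧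
      a + 2 * δ ≤ 2 * Real.pi := by
    rcases le_total t0 (2 * Real.pi - 2 * δ) with h | h
    · exact ⟨t0, ht0.1, le_rfl, by linarith, by linarith⟩
    · exact ⟨2 * Real.pi - 2 * δ, by linarith, h, by linarith [ht0.2], by linarith⟩
  refine ⟨a, a + 2 * δ, ha0, by linarith, hab, by ring, ?_⟩
  -- the phase
  set θ : ℝ → ℝ := fun t => lam * φ t - k * t with hθ
  have hθd : ∀ t, HasDerivAt θ (lam * deriv φ t - k) t := fun t => by
    have h := ((hdiff t).hasDerivAt.const_mul lam).sub ((hasDerivAt_id t).const_mul (k : ℝ))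
    rw [mul_one] at h
    exact h
  have hslope : ∀ t ∈ Icc a (a + 2 * δ), ‖lam * deriv φ t - k‖ ≤ 1 / (4 * δ) := by
    intro t ht
    have h1 := hφ_mod (2 * δ) (by positivity) t t0
      (by rw [abs_le]; constructor <;> linarith [ht.1, ht.2])
    have h2 : lam * deriv φ t - k = lam * (deriv φ t - deriv φ t0) := by
      rw [ht0k]; field_simp
    rw [h2, Real.norm_eq_abs, abs_mul, abs_of_pos hlam0]
    refine (mul_le_mul_of_nonneg_left h1 hlam0.le).trans (le_of_eq ?_)
    field_simp at hχ ⊢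
    linarith
  have hphase : ∀ t ∈ Icc a (a + 2 * δ), |θ t - θ t0| ≤ 1 / 2 := by
    intro t ht
    have h1 := (convex_Icc a (a + 2 * δ)).norm_image_sub_le_of_norm_hasDerivWithin_le
      (fun x _ => (hθd x).hasDerivWithinAt) hslope (⟨hat, hta⟩ : t0 ∈ Icc a (a + 2 * δ)) ht
    rw [Real.norm_eq_abs, Real.norm_eq_abs] at h1
    have h2 : |t - t0| ≤ 2 * δ := by rw [abs_le]; constructor <;> linarith [ht.1, ht.2]
    refine (h1.trans (mul_le_mul_of_nonneg_left h2 (by positivity))).trans (le_of_eq ?_)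
    field_simp; norm_num
  have hθc : Continuous θ := by
    have := hdiff.continuous
    fun_prop
  have hTc := triangleFun_continuous a (a + 2 * δ)
  have hT0 := triangleFun_nonneg a (a + 2 * δ)
  set T := triangleFun a (a + 2 * δ) with hT
  have hpt : ∀ t, T t * (1 / 2) ≤ T t * Real.cos (θ t - θ t0) := by
    intro t
    by_cases ht : t ∈ Icc a (a + 2 * δ)
    · apply mul_le_mul_of_nonneg_left _ (hT0 t)
      have h1 := Real.one_sub_sq_div_two_le_cos (x := θ t - θ t0)
      have h2 := abs_le.1 (hphase t ht)
      nlinarith [h2.1, h2.2]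
    · rw [hT, triangleFun_eq_zero a δ t hd ht]; simp
  have hint : δ ≤ ∫ t in (0:ℝ)..(2 * Real.pi), T t := by
    rw [← triangleFun_integral a δ hd]
    apply intervalIntegral.integral_mono_interval ha0 (by linarith) hab
    · exact Filter.Eventually.of_forall hT0
    · exact hTc.intervalIntegrable _ _
  have hlow : δ / 2 ≤ ∫ t in (0:ℝ)..(2 * Real.pi), T t * Real.cos (θ t - θ t0) := by
    have h1 : ∫ t in (0:ℝ)..(2 * Real.pi), T t * (1 / 2) ≤
        ∫ t in (0:ℝ)..(2 * Real.pi), T t * Real.cos (θ t - θ t0) := by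
      apply intervalIntegral.integral_mono_on (by positivity)
      · exact (by fun_prop : Continuous fun t => T t * (1 / 2)).intervalIntegrable _ _
      · exact (by fun_prop : Continuous fun t => T t * Real.cos (θ t - θ t0)).intervalIntegrable _ _
      · intro t _; exact hpt t
    rw [intervalIntegral.integral_mul_const] at h1
    linarith
  have hG : Continuous fun t : ℝ => (T t : ℂ) * Complex.exp (((θ t - θ t0 : ℝ) : ℂ) * Complex.I) := by
    fun_prop
  have hre : (∫ t in (0:ℝ)..(2 * Real.pi),
      (T t : ℂ) * Complex.exp (((θ t - θ t0 : ℝ) : ℂ) * Complex.I)).re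
      = ∫ t in (0:ℝ)..(2 * Real.pi), T t * Real.cos (θ t - θ t0) := by
    have := Complex.reCLM.intervalIntegral_comp_comm
      (hG.intervalIntegrable (μ := volume) 0 (2 * Real.pi))
    rw [Complex.reCLM_apply] at this
    rw [← this]
    apply intervalIntegral.integral_congr
    intro t _
    simp only [Complex.reCLM_apply, Complex.re_ofReal_mul, Complex.exp_ofReal_mul_I_re]
  have hnorm : δ / 2 ≤ ‖∫ t in (0:ℝ)..(2 * Real.pi),
      (T t : ℂ) * Complex.exp (((θ t - θ t0 : ℝ) : ℂ) * Complex.I)‖ := by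
    rw [← hre] at hlow
    exact hlow.trans (Complex.re_le_norm _)
  have hfac : ∀ t : ℝ, (T t : ℂ) * Complex.exp (Complex.I * (lam : ℂ) * (φ t : ℂ)) *
        Complex.exp (-Complex.I * (k : ℂ) * (t : ℂ)) =
      Complex.exp ((θ t0 : ℝ) * Complex.I) *
        ((T t : ℂ) * Complex.exp (((θ t - θ t0 : ℝ) : ℂ) * Complex.I)) := by
    intro t
    rw [mul_assoc, ← Complex.exp_add, mul_left_comm, ← Complex.exp_add]
    congr 2
    simp only [hθ]
    push_cast
    ring
  unfold fourierCoef
  simp only [hfac]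
  rw [intervalIntegral.integral_const_mul, norm_mul, norm_mul, Complex.norm_exp_ofReal_mul_I, one_mul]
  have hp : ‖(1 / (2 * (Real.pi : ℂ)))‖ = 1 / (2 * Real.pi) := by
    simp [abs_of_pos hπ]
  rw [hp]
  calc δ / (4 * Real.pi) = 1 / (2 * Real.pi) * (δ / 2) := by field_simp; norm_num
    _ ≤ _ := mul_le_mul_of_nonneg_left hnorm (by positivity)
end

section
/- There is an absolute constant c > 0 with the following property: for every real function g on [0,2π] that is linear (g(t) = at + b) on an interval Δ ⊆ [0,2π], and for every y ≥ 2, one has Σ_{|k| ≤ y} |(1_Δ · e^{ig})^∧(k)| ≤ c · log y, where the sum is over integers k with |k| ≤ y. The constant c is independent of Δ, g and y. -/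
open MeasureTheory Real Set
open scoped ENNReal

lemma aux_coef (g : ℝ → ℝ) (a b u v : ℝ) (huv : u ≤ v)
    (hsub : Icc u v ⊆ Icc 0 (2 * Real.pi)) (hg : ∀ t ∈ Icc u v, g t = a * t + b) (k : ℤ) :
    fourierCoef (Set.indicator (Icc u v) (fun s => Complex.exp (Complex.I * (g s : ℂ)))) k
      = (1 / (2 * (Real.pi : ℂ))) * (Complex.exp (Complex.I * b) *
        ∫ t in u..v, Complex.exp ((Complex.I * ((a - k : ℝ) : ℂ)) * t)) := by
  unfold fourierCoef
  congr 1
  rw [intervalIntegral.integral_of_le (by positivity), ← integral_Icc_eq_integral_Ioc,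
    ← intervalIntegral.integral_const_mul, intervalIntegral.integral_of_le huv,
    ← integral_Icc_eq_integral_Ioc]
  have h1 : ∀ t : ℝ, (Icc u v).indicator (fun s => Complex.exp (Complex.I * (g s : ℂ))) t *
      Complex.exp (-Complex.I * (k : ℂ) * (t : ℂ)) =
      (Icc u v).indicator (fun t : ℝ => Complex.exp (Complex.I * b) *
        Complex.exp ((Complex.I * ((a - k : ℝ) : ℂ)) * t)) t := by
    intro t
    by_cases ht : t ∈ Icc u v
    · rw [indicator_of_mem ht, indicator_of_mem ht, hg t ht, ← Complex.exp_add, ← Complex.exp_add]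
      congr 1
      push_cast
      ring
    · rw [indicator_of_notMem ht, indicator_of_notMem ht, zero_mul]
  simp_rw [h1]
  rw [setIntegral_indicator measurableSet_Icc, inter_eq_right.mpr hsub]

lemma aux_norm_exp (c t : ℝ) : ‖Complex.exp ((Complex.I * (c : ℂ)) * t)‖ = 1 := by
  rw [show (Complex.I * (c : ℂ)) * t = ((c * t : ℝ) : ℂ) * Complex.I by push_cast; ring]
  exact Complex.norm_exp_ofReal_mul_I _

lemma aux_int1 (c u v : ℝ) (huv : u ≤ v) :
    ‖∫ t in u..v, Complex.exp ((Complex.I * (c : ℂ)) * t)‖ ≤ v - u := by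
  have := intervalIntegral.norm_integral_le_of_norm_le_const (a := u) (b := v) (C := 1)
    (f := fun t : ℝ => Complex.exp ((Complex.I * (c : ℂ)) * t))
    (fun t _ => (aux_norm_exp c t).le)
  rwa [one_mul, abs_of_nonneg (sub_nonneg.mpr huv)] at this

lemma aux_int2 (c u v : ℝ) (hc : c ≠ 0) :
    ‖∫ t in u..v, Complex.exp ((Complex.I * (c : ℂ)) * t)‖ ≤ 2 / |c| := by
  have hc' : Complex.I * (c : ℂ) ≠ 0 := by simp [hc]
  rw [integral_exp_mul_complex hc', norm_div]
  have : ‖Complex.I * (c : ℂ)‖ = |c| := by simp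
  rw [this]
  gcongr
  refine (norm_sub_le _ _).trans ?_
  rw [aux_norm_exp, aux_norm_exp]
  norm_num

lemma aux_bound (g : ℝ → ℝ) (a b u v : ℝ) (huv : u ≤ v)
    (hsub : Icc u v ⊆ Icc 0 (2 * Real.pi)) (hg : ∀ t ∈ Icc u v, g t = a * t + b) (k : ℤ) :
    ‖fourierCoef (Set.indicator (Icc u v) (fun s => Complex.exp (Complex.I * (g s : ℂ)))) k‖
      ≤ 3 * (1 / (1 + |((k - ⌊a⌋ : ℤ) : ℝ)|)) := by
  rw [aux_coef g a b u v huv hsub hg k, norm_mul, norm_mul]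
  have e1 : ‖Complex.exp (Complex.I * b)‖ = 1 := by
    rw [mul_comm]; exact Complex.norm_exp_ofReal_mul_I _
  have e2 : ‖(1 / (2 * (Real.pi : ℂ)))‖ = 1 / (2 * Real.pi) := by
    simp [abs_of_pos Real.pi_pos]
  rw [e1, e2, one_mul]
  have hpi := Real.pi_gt_three
  have hu := (hsub (left_mem_Icc.mpr huv)).1
  have hv := (hsub (right_mem_Icc.mpr huv)).2
  have b1 : 1 / (2 * Real.pi) * ‖∫ t in u..v, Complex.exp ((Complex.I * ((a - k : ℝ) : ℂ)) * t)‖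
      ≤ 1 := by
    rw [one_div_mul_eq_div, div_le_one (by positivity)]
    exact (aux_int1 _ u v huv).trans (by linarith)
  have b2 : ∀ r : ℝ, 0 < r → r ≤ |a - k| →
      1 / (2 * Real.pi) * ‖∫ t in u..v, Complex.exp ((Complex.I * ((a - k : ℝ) : ℂ)) * t)‖
      ≤ 1 / r := by
    intro r hr hra
    have hne : a - k ≠ 0 := by
      intro h
      rw [h, abs_zero] at hra
      linarith
    have h2 := aux_int2 (a - k) u v hne
    have h3 : 2 / |a - k| ≤ 2 / r := by gcongr
    calc _ ≤ 1 / 2 * (2 / r) := by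
          gcongr
          · linarith
          · exact h2.trans h3
      _ = 1 / r := by ring
  have f1 := Int.floor_le a
  have f2 := Int.lt_floor_add_one a
  rcases lt_or_ge k ⌊a⌋ with h | h
  · have h' : (k : ℝ) + 1 ≤ ⌊a⌋ := by exact_mod_cast h
    rw [Int.cast_sub]
    rw [abs_of_neg (by linarith : (k : ℝ) - ⌊a⌋ < 0)]
    refine (b2 (⌊a⌋ - k) (by linarith) ((by linarith : _ ≤ a - k).trans (le_abs_self _))).trans ?_
    rw [mul_one_div, div_le_div_iff₀ (by linarith) (by linarith)]
    linarith
  · rcases lt_or_ge k (⌊a⌋ + 2) with h2 | h2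
    · refine b1.trans ?_
      have h' : (k : ℝ) ≤ ⌊a⌋ + 1 := by exact_mod_cast (by omega : k ≤ ⌊a⌋ + 1)
      have h'' : (⌊a⌋ : ℝ) ≤ k := by exact_mod_cast h
      rw [Int.cast_sub]
      rw [abs_of_nonneg (by linarith : (0:ℝ) ≤ (k : ℝ) - ⌊a⌋), mul_one_div,
        le_div_iff₀ (by linarith)]
      linarith
    · have h' : (⌊a⌋ : ℝ) + 2 ≤ k := by exact_mod_cast h2
      rw [Int.cast_sub]
      rw [abs_of_nonneg (by linarith : (0:ℝ) ≤ (k : ℝ) - ⌊a⌋)]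
      refine (b2 (k - ⌊a⌋ - 1) (by linarith)
        ((by linarith : _ ≤ -(a - k)).trans (neg_le_abs _))).trans ?_
      rw [mul_one_div, div_le_div_iff₀ (by linarith) (by linarith)]
      linarith

lemma aux_harm (n : ℕ) (hn : 1 ≤ n) :
    ∑ j ∈ Finset.range n, (1 / (1 + (j : ℝ))) ≤ 1 + Real.log n := by
  have h := harmonic_le_one_add_log n
  refine le_trans (le_of_eq ?_) h
  unfold harmonic
  push_cast
  refine Finset.sum_congr rfl fun j _ => ?_
  rw [one_div, add_comm]

lemma aux_sum (m : ℤ) (n : ℕ) (S : Finset ℤ) (hS : S.card ≤ n) (hn : 1 ≤ n) :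
    ∑ k ∈ S, (1 / (1 + |((k - m : ℤ) : ℝ)|)) ≤ 3 + 2 * Real.log n := by
  classical
  have hn0 : (0:ℝ) < n := by exact_mod_cast hn
  rw [← Finset.sum_filter_add_sum_filter_not S (fun k => |k - m| < (n : ℤ))]
  have hfar : ∑ k ∈ S with ¬ (|k - m| < (n : ℤ)), (1 / (1 + |((k - m : ℤ) : ℝ)|)) ≤ 1 := by
    have : ∀ k ∈ S.filter (fun k => ¬ (|k - m| < (n : ℤ))),
        (1 / (1 + |((k - m : ℤ) : ℝ)|)) ≤ 1 / (n : ℝ) := by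
      intro k hk
      have h := (Finset.mem_filter.mp hk).2
      push Not at h
      have h' : (n : ℝ) ≤ |((k - m : ℤ) : ℝ)| := by exact_mod_cast h
      apply one_div_le_one_div_of_le hn0
      linarith
    refine (Finset.sum_le_card_nsmul _ _ _ this).trans ?_
    rw [nsmul_eq_mul, mul_one_div, div_le_one hn0]
    exact_mod_cast (Finset.card_filter_le _ _).trans hS
  set A := (Finset.range n).image (fun j : ℕ => m + (j : ℤ)) with hA
  set B := (Finset.range n).image (fun j : ℕ => m - (j : ℤ)) with hB
  have hAs : ∑ k ∈ A, (1 / (1 + |((k - m : ℤ) : ℝ)|)) ≤ 1 + Real.log n := by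
    rw [hA, Finset.sum_image (by intro x _ y _ h; simpa using h)]
    simpa using aux_harm n hn
  have hBs : ∑ k ∈ B, (1 / (1 + |((k - m : ℤ) : ℝ)|)) ≤ 1 + Real.log n := by
    rw [hB, Finset.sum_image (by intro x _ y _ h; simpa using h)]
    simpa using aux_harm n hn
  have hnear : ∑ k ∈ S with (|k - m| < (n : ℤ)), (1 / (1 + |((k - m : ℤ) : ℝ)|))
      ≤ ∑ k ∈ A ∪ B, (1 / (1 + |((k - m : ℤ) : ℝ)|)) := by
    apply Finset.sum_le_sum_of_subset_of_nonneg
    · intro k hk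
      have h := abs_lt.mp (Finset.mem_filter.mp hk).2
      rw [Finset.mem_union, hA, hB, Finset.mem_image, Finset.mem_image]
      rcases le_total m k with h1 | h1
      · left
        exact ⟨(k - m).toNat, by rw [Finset.mem_range]; omega, by omega⟩
      · right
        exact ⟨(m - k).toNat, by rw [Finset.mem_range]; omega, by omega⟩
    · intros; positivity
  have hun := Finset.sum_union_inter (s₁ := A) (s₂ := B)
    (f := fun k : ℤ => (1 / (1 + |((k - m : ℤ) : ℝ)|)))
  have hpos : 0 ≤ ∑ k ∈ A ∩ B, (1 / (1 + |((k - m : ℤ) : ℝ)|)) :=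
    Finset.sum_nonneg fun _ _ => by positivity
  linarith

/-- Lemma 2: there is an absolute constant c such that for any g linear
on an interval Δ ⊆ [0,2π] and any y ≥ 2, Σ_{|k|≤y} |(1_Δ e^{ig})^∧(k)| ≤ c·log y. -/
theorem statement7 :
    ∃ c : ℝ, 0 < c ∧
      ∀ (g : ℝ → ℝ) (a b u v : ℝ), u ≤ v → Icc u v ⊆ Icc 0 (2 * Real.pi) →
        (∀ t ∈ Icc u v, g t = a * t + b) →
        ∀ y : ℝ, 2 ≤ y →
          ∑ k ∈ Finset.Icc (-⌊y⌋) ⌊y⌋,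
            ‖fourierCoef
              (Set.indicator (Icc u v) (fun s => Complex.exp (Complex.I * (g s : ℂ)))) k‖
            ≤ c * Real.log y := by
  refine ⟨36, by norm_num, ?_⟩
  intro g a b u v huv hsub hg y hy
  refine (Finset.sum_le_sum fun k _ => aux_bound g a b u v huv hsub hg k).trans ?_
  rw [← Finset.mul_sum]
  have hf : (⌊y⌋ : ℝ) ≤ y := Int.floor_le y
  have hf2 : (2 : ℤ) ≤ ⌊y⌋ := Int.le_floor.mpr (by exact_mod_cast hy)
  set n : ℕ := (2 * ⌊y⌋ + 1).toNat with hn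
  have hnZ : (n : ℤ) = 2 * ⌊y⌋ + 1 := by omega
  have hnR : (n : ℝ) = 2 * ⌊y⌋ + 1 := by exact_mod_cast hnZ
  have hs := aux_sum ⌊a⌋ n (Finset.Icc (-⌊y⌋) ⌊y⌋) (by rw [Int.card_Icc]; omega) (by omega)
  have hn0 : (0:ℝ) < n := by exact_mod_cast (by omega : 0 < n)
  have hlog : Real.log n ≤ 3 * Real.log y := by
    have : Real.log n ≤ Real.log (y ^ 3) := by
      apply Real.log_le_log hn0
      rw [hnR]
      nlinarith [mul_nonneg (sub_nonneg.mpr hy) (sub_nonneg.mpr hy), sq_nonneg y,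
        mul_nonneg (by linarith : 0 ≤ y) (mul_nonneg (sub_nonneg.mpr hy) (sub_nonneg.mpr hy))]
    rwa [Real.log_pow] at this
  have hl2 : Real.log 2 ≤ Real.log y := Real.log_le_log (by norm_num) hy
  have := Real.log_two_gt_d9
  linarith
end

section
/- Let ρ_j > 0, j = 0,1,2,…, satisfy ω(ρ_j) = 2^{-j} with ρ_0 = 2π, where ω is a modulus of continuity with ω(2π) = 1 and ω(2δ) < 2ω(δ) for 0 < δ ≤ 2π. Let E ⊆ [0,2π] be a closed set such that for every j ≥ 0, E is covered by 2^j closed intervals of equal length ρ_j. Then there exists c > 0 such that: for every λ ≥ 2 and every real function g on [0,2π] that is linear on each interval complementary to E in [0,2π], one has Σ_{|k| ≤ 2λ} |(e^{ig})^∧(k)| ≤ c · Θ(λ), where Θ(y) = (y/log y)·χ^{-1}((log y)²/y) and χ(δ) = δ·ω(δ). The constant c is independent of λ and g. -/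
open MeasureTheory Real Set
open scoped ENNReal

namespace S8

lemma sum_bound (t : ℤ → ℝ) (a : ℝ) (h0 : ∀ k, 0 ≤ t k) (h1 : ∀ k, t k ≤ 7)
    (h2 : ∀ k : ℤ, |a - k| * t k ≤ 2) (S : Finset ℤ) (K : ℕ) (hK : 0 < K) (hS : S.card ≤ K) :
    ∑ k ∈ S, t k ≤ 16 + 4 * ((harmonic K : ℚ) : ℝ) := by
  classical
  set n : ℤ := ⌊a⌋ with hn
  have hna : (n : ℝ) ≤ a := Int.floor_le a
  have hna' : a < n + 1 := Int.lt_floor_add_one a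
  have hKr : (0 : ℝ) < K := by exact_mod_cast hK
  set A : ℤ → ℝ := fun k => ∑ d ∈ Finset.range K, if k = n + 2 + d then 2 / ((d : ℝ) + 1) else 0
  set B : ℤ → ℝ := fun k => ∑ d ∈ Finset.range K, if k = n - 1 - d then 2 / ((d : ℝ) + 1) else 0
  have hA0 : ∀ k, 0 ≤ A k := fun k => Finset.sum_nonneg fun d _ => by split_ifs <;> positivity
  have hB0 : ∀ k, 0 ≤ B k := fun k => Finset.sum_nonneg fun d _ => by split_ifs <;> positivity
  have key : ∀ (d : ℕ) (k : ℤ), (d : ℝ) + 1 ≤ |a - k| → t k ≤ 2 / ((d : ℝ) + 1) := by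
    intro d k hd
    rw [le_div_iff₀ (by positivity)]
    have := h2 k
    nlinarith [h0 k]
  have hpt : ∀ k, t k ≤ 2 / K + ((if k = n then 7 else 0) + (if k = n + 1 then 7 else 0) + A k + B k) := by
    intro k
    have hKp : (0:ℝ) < 2 / K := by positivity
    rcases lt_trichotomy k n with hk | hk | hk
    · obtain ⟨d, hd⟩ : ∃ d : ℕ, k = n - 1 - d := ⟨(n - 1 - k).toNat, by omega⟩
      have hb : t k ≤ 2 / ((d : ℝ) + 1) := by
        apply key
        rw [hd]; push_cast
        refine le_trans ?_ (le_abs_self _)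
        linarith
      have e1 : (0:ℝ) ≤ (if k = n then 7 else 0) := by split_ifs <;> norm_num
      have e2 : (0:ℝ) ≤ (if k = n + 1 then 7 else 0) := by split_ifs <;> norm_num
      by_cases hdK : d < K
      · have : 2 / ((d : ℝ) + 1) ≤ B k := by
          have := Finset.single_le_sum (f := fun d : ℕ => if k = n - 1 - d then 2 / ((d : ℝ) + 1) else 0)
            (s := Finset.range K) (fun d _ => by split_ifs <;> positivity) (Finset.mem_range.2 hdK)
          simpa [hd, B] using this
        linarith [hA0 k]
      · have : 2 / ((d : ℝ) + 1) ≤ 2 / K := by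
          have : (K : ℝ) ≤ d := by exact_mod_cast not_lt.1 hdK
          gcongr; linarith
        linarith [hA0 k, hB0 k]
    · have e2 : (0:ℝ) ≤ (if k = n + 1 then 7 else 0) := by split_ifs <;> norm_num
      rw [if_pos hk]
      linarith [hA0 k, hB0 k, h1 k]
    · have e1 : (0:ℝ) ≤ (if k = n then 7 else 0) := by split_ifs <;> norm_num
      by_cases hk1 : k = n + 1
      · rw [if_pos hk1]
        linarith [hA0 k, hB0 k, h1 k]
      have e2 : (0:ℝ) ≤ (if k = n + 1 then 7 else 0) := by split_ifs <;> norm_num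
      obtain ⟨d, hd⟩ : ∃ d : ℕ, k = n + 2 + d := ⟨(k - n - 2).toNat, by omega⟩
      have hb : t k ≤ 2 / ((d : ℝ) + 1) := by
        apply key
        rw [hd]; push_cast
        refine le_trans ?_ (neg_le_abs _)
        linarith
      by_cases hdK : d < K
      · have : 2 / ((d : ℝ) + 1) ≤ A k := by
          have := Finset.single_le_sum (f := fun d : ℕ => if k = n + 2 + d then 2 / ((d : ℝ) + 1) else 0)
            (s := Finset.range K) (fun d _ => by split_ifs <;> positivity) (Finset.mem_range.2 hdK)
          simpa [hd, A] using this
        linarith [hB0 k]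
      · have : 2 / ((d : ℝ) + 1) ≤ 2 / K := by
          have : (K : ℝ) ≤ d := by exact_mod_cast not_lt.1 hdK
          gcongr; linarith
        linarith [hA0 k, hB0 k]
  have hH : ∑ d ∈ Finset.range K, 2 / ((d : ℝ) + 1) = 2 * ((harmonic K : ℚ) : ℝ) := by
    simp [harmonic, Finset.mul_sum, div_eq_mul_inv]
  have hAs : ∑ k ∈ S, A k ≤ 2 * ((harmonic K : ℚ) : ℝ) := by
    rw [← hH, Finset.sum_comm]
    refine Finset.sum_le_sum fun d _ => ?_
    rw [Finset.sum_ite_eq']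
    split_ifs <;> first | exact le_rfl | positivity
  have hBs : ∑ k ∈ S, B k ≤ 2 * ((harmonic K : ℚ) : ℝ) := by
    rw [← hH, Finset.sum_comm]
    refine Finset.sum_le_sum fun d _ => ?_
    rw [Finset.sum_ite_eq']
    split_ifs <;> first | exact le_rfl | positivity
  have hs1 : ∑ k ∈ S, (if k = n then (7:ℝ) else 0) ≤ 7 := by
    rw [Finset.sum_ite_eq']; split_ifs <;> norm_num
  have hs2 : ∑ k ∈ S, (if k = n + 1 then (7:ℝ) else 0) ≤ 7 := by
    rw [Finset.sum_ite_eq']; split_ifs <;> norm_num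
  have hs3 : ∑ k ∈ S, (2 / K : ℝ) ≤ 2 := by
    rw [Finset.sum_const, nsmul_eq_mul, ← mul_div_assoc, div_le_iff₀ hKr]
    have : (S.card : ℝ) ≤ K := by exact_mod_cast hS
    linarith
  calc ∑ k ∈ S, t k ≤ ∑ k ∈ S, (2 / K + ((if k = n then 7 else 0) + (if k = n + 1 then 7 else 0) + A k + B k)) :=
        Finset.sum_le_sum fun k _ => hpt k
    _ ≤ _ := by
        simp only [Finset.sum_add_distrib]
        linarith

lemma norm_e (x : ℝ) : ‖Complex.exp (Complex.I * x)‖ = 1 := by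
  rw [mul_comm]; exact Complex.norm_exp_ofReal_mul_I x

lemma norm_ek (k : ℤ) (t : ℝ) : ‖Complex.exp (-Complex.I * (k : ℂ) * (t : ℂ))‖ = 1 := by
  have : -Complex.I * (k : ℂ) * (t : ℂ) = Complex.I * ((-(k * t) : ℝ) : ℂ) := by push_cast; ring
  rw [this, norm_e]

/-- single linear piece -/
lemma piece1 (u v : ℝ) (hu : 0 ≤ u) (hv : v ≤ 2 * π) (g : ℝ → ℝ) (k : ℤ) :
    ‖∫ t in Ioo u v, Complex.exp (Complex.I * (g t : ℂ)) * Complex.exp (-Complex.I * (k : ℂ) * (t : ℂ))‖ ≤ 7 := by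
  have := norm_setIntegral_le_of_norm_le_const (μ := volume) (s := Ioo u v) (C := 1)
    (f := fun t => Complex.exp (Complex.I * (g t : ℂ)) * Complex.exp (-Complex.I * (k : ℂ) * (t : ℂ)))
    (by simp) (fun t _ => by rw [norm_mul, norm_e, norm_ek]; norm_num)
  refine this.trans ?_
  rw [Measure.real, Real.volume_Ioo, one_mul]
  exact ENNReal.toReal_le_of_le_ofReal (by norm_num)
    (ENNReal.ofReal_le_ofReal (by linarith [Real.pi_lt_d2]))

lemma piece2 (u v : ℝ) (huv : u ≤ v) (a b : ℝ) (g : ℝ → ℝ) (k : ℤ)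
    (hg : ∀ t ∈ Ioo u v, g t = a * t + b) :
    |a - k| * ‖∫ t in Ioo u v, Complex.exp (Complex.I * (g t : ℂ)) * Complex.exp (-Complex.I * (k : ℂ) * (t : ℂ))‖ ≤ 2 := by
  by_cases hak : a = k
  · simp [hak]
  have hak' : a - k ≠ 0 := sub_ne_zero.2 hak
  have hc : Complex.I * ((a - k : ℝ) : ℂ) ≠ 0 := mul_ne_zero Complex.I_ne_zero (by exact_mod_cast hak')
  have : ∫ t in Ioo u v, Complex.exp (Complex.I * (g t : ℂ)) * Complex.exp (-Complex.I * (k : ℂ) * (t : ℂ))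
      = Complex.exp (Complex.I * b) * ((Complex.exp (Complex.I * ((a - k : ℝ) : ℂ) * v) - Complex.exp (Complex.I * ((a - k : ℝ) : ℂ) * u)) / (Complex.I * ((a - k : ℝ) : ℂ))) := by
    rw [← integral_exp_mul_complex hc, intervalIntegral.integral_of_le huv, integral_Ioc_eq_integral_Ioo,
      ← integral_const_mul]
    refine setIntegral_congr_fun measurableSet_Ioo fun t ht => ?_
    simp only [hg t ht]
    rw [← Complex.exp_add, ← Complex.exp_add]
    congr 1; push_cast; ring
  rw [this, norm_mul, norm_e, norm_div, norm_mul, Complex.norm_I, Complex.norm_real, Real.norm_eq_abs, one_mul, one_mul,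
    mul_div_cancel₀ _ (abs_ne_zero.2 hak')]
  refine (norm_sub_le _ _).trans ?_
  have : ∀ w : ℝ, ‖Complex.exp (Complex.I * ((a - k : ℝ) : ℂ) * w)‖ = 1 := fun w => by
    rw [mul_assoc, ← Complex.ofReal_mul, norm_e]
  rw [this, this]; norm_num

lemma orth (m : ℤ) : ∫ t in (0:ℝ)..(2 * π), Complex.exp (-Complex.I * (m : ℂ) * (t : ℂ)) =
    if m = 0 then (2 * π : ℂ) else 0 := by
  split_ifs with h
  · simp [h]
  · have hc : -Complex.I * (m : ℂ) ≠ 0 := mul_ne_zero (by simp) (by exact_mod_cast h)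
    rw [integral_exp_mul_complex hc]
    have : -Complex.I * (m : ℂ) * ((2 * π : ℝ) : ℂ) = ((-m : ℤ) : ℂ) * (2 * π * Complex.I) := by push_cast; ring
    rw [this, Complex.exp_int_mul_two_pi_mul_I]
    simp

lemma bessel (S : Finset ℤ) (e : ℤ → ℂ) (he : ∀ k, ‖e k‖ ≤ 1) :
    ∫ t in (0:ℝ)..(2 * π), ‖∑ k ∈ S, e k * Complex.exp (-Complex.I * (k : ℂ) * (t : ℂ))‖ ^ 2 ≤ 2 * π * S.card := by
  have h1 : ∀ t : ℝ, ((‖∑ k ∈ S, e k * Complex.exp (-Complex.I * (k : ℂ) * (t : ℂ))‖ ^ 2 : ℝ) : ℂ)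
     = ∑ k ∈ S, ∑ l ∈ S, (e k * (starRingEnd ℂ) (e l)) * Complex.exp (-Complex.I * ((k - l : ℤ) : ℂ) * (t : ℂ)) := by
    intro t
    rw [Complex.ofReal_pow, ← Complex.mul_conj', map_sum, Finset.sum_mul_sum]
    refine Finset.sum_congr rfl fun k _ => Finset.sum_congr rfl fun l _ => ?_
    rw [map_mul, ← Complex.exp_conj]
    have : (starRingEnd ℂ) (-Complex.I * (l : ℂ) * (t : ℂ)) = Complex.I * l * t := by
      simp
    rw [this, mul_mul_mul_comm, ← Complex.exp_add]
    congr 2; push_cast; ring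
  have h2 : ((∫ t in (0:ℝ)..(2 * π), ‖∑ k ∈ S, e k * Complex.exp (-Complex.I * (k : ℂ) * (t : ℂ))‖ ^ 2 : ℝ) : ℂ)
      = ((2 * π * ∑ k ∈ S, ‖e k‖ ^ 2 : ℝ) : ℂ) := by
    have h4 : ((2 * π * ∑ k ∈ S, ‖e k‖ ^ 2 : ℝ) : ℂ) = ∑ k ∈ S, 2 * (π : ℂ) * (‖e k‖ : ℂ) ^ 2 := by
      push_cast
      rw [Finset.mul_sum]
    rw [← intervalIntegral.integral_ofReal, h4]
    simp_rw [h1]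
    rw [intervalIntegral.integral_finsetSum]
    · refine Finset.sum_congr rfl fun k hk => ?_
      rw [intervalIntegral.integral_finsetSum]
      · simp_rw [intervalIntegral.integral_const_mul, orth, sub_eq_zero]
        rw [Finset.sum_congr rfl (g := fun l => if k = l then (e k * (starRingEnd ℂ) (e l)) * (2 * π : ℂ) else 0)
          (fun l _ => by split_ifs <;> simp)]
        rw [Finset.sum_ite_eq, if_pos hk, Complex.mul_conj']
        ring
      · intro l _
        exact Continuous.intervalIntegrable (by fun_prop) _ _
    · intro l _
      exact Continuous.intervalIntegrable (by fun_prop) _ _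
  have h3 := Complex.ofReal_injective h2
  rw [h3]
  have : ∑ k ∈ S, ‖e k‖ ^ 2 ≤ S.card := by
    calc _ ≤ ∑ k ∈ S, (1:ℝ) := Finset.sum_le_sum fun k _ => pow_le_one₀ (norm_nonneg _) (he k)
      _ = _ := by simp
  have := Real.pi_pos
  gcongr

/-- The bad part -/
lemma bad (S : Finset ℤ) (H : Set ℝ) (hHm : MeasurableSet H) (hH : H ⊆ Ioo 0 (2 * π)) (f : ℝ → ℂ)
    (hf : IntegrableOn f (Ioo 0 (2 * π))) (hf1 : ∀ t, ‖f t‖ ≤ 1) (s : ℝ) (hs : 0 < s) :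
    ∑ k ∈ S, ‖∫ t in H, f t * Complex.exp (-Complex.I * (k : ℂ) * (t : ℂ))‖ ≤
      s * volume.real H / 2 + π * S.card / s := by
  have hfH : IntegrableOn f H := hf.mono_set hH
  have hfin : volume H ≠ ⊤ := ((measure_mono hH).trans_lt measure_Ioo_lt_top).ne
  have hInt : ∀ k : ℤ, IntegrableOn (fun t => f t * Complex.exp (-Complex.I * (k : ℂ) * (t : ℂ))) H := by
    intro k
    refine Integrable.mul_bdd (c := 1) hfH (by fun_prop) (Filter.Eventually.of_forall fun t => (norm_ek k t).le)
  have : ∀ z : ℂ, ∃ w : ℂ, ‖w‖ ≤ 1 ∧ w * z = ‖z‖ := by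
    intro z
    by_cases hz : z = 0
    · exact ⟨0, by simp, by simp [hz]⟩
    · have hz' : (‖z‖ : ℂ) ≠ 0 := by simpa using hz
      refine ⟨(starRingEnd ℂ) z / ‖z‖, ?_, ?_⟩
      · have : ‖z‖ ≠ 0 := by simpa using hz
        simp [div_self this]
      · rw [div_mul_eq_mul_div, Complex.conj_mul', sq, mul_div_assoc, div_self hz', mul_one]
  choose w hw1 hw2 using this
  set e : ℤ → ℂ := fun k => w (∫ t in H, f t * Complex.exp (-Complex.I * (k : ℂ) * (t : ℂ))) with he
  set P : ℝ → ℂ := fun t => ∑ k ∈ S, e k * Complex.exp (-Complex.I * (k : ℂ) * (t : ℂ)) with hP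
  have hPc : Continuous P := by fun_prop
  have hb := bessel S e (fun k => hw1 _)
  have h1 : ((∑ k ∈ S, ‖∫ t in H, f t * Complex.exp (-Complex.I * (k : ℂ) * (t : ℂ))‖ : ℝ) : ℂ)
      = ∫ t in H, f t * P t := by
    push_cast
    rw [Finset.sum_congr rfl fun k _ => (hw2 _).symm]
    have : ∀ t, f t * P t = ∑ k ∈ S, e k * (f t * Complex.exp (-Complex.I * (k : ℂ) * (t : ℂ))) := by
      intro t
      rw [hP, Finset.mul_sum]
      exact Finset.sum_congr rfl fun k _ => by ring
    simp_rw [this]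
    rw [integral_finsetSum _ fun k _ => (hInt k).const_mul _]
    simp_rw [integral_const_mul]
    rfl
  have hPi : IntegrableOn (fun t => ‖P t‖ ^ 2) (Ioo 0 (2 * π)) :=
    ((Continuous.integrableOn_Icc (by fun_prop)).mono_set Ioo_subset_Icc_self)
  have h2 : ∑ k ∈ S, ‖∫ t in H, f t * Complex.exp (-Complex.I * (k : ℂ) * (t : ℂ))‖ = ‖∫ t in H, f t * P t‖ := by
    rw [← h1, Complex.norm_real, Real.norm_of_nonneg (Finset.sum_nonneg fun _ _ => norm_nonneg _)]
  rw [h2]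
  have hi1 : IntegrableOn (fun _ : ℝ => s / 2) H := integrableOn_const hfin
  have hi2 : IntegrableOn (fun t => ‖P t‖ ^ 2 / (2 * s)) H := (hPi.mono_set hH).div_const _
  calc ‖∫ t in H, f t * P t‖ ≤ ∫ t in H, (s / 2 + ‖P t‖ ^ 2 / (2 * s)) := by
        refine norm_integral_le_of_norm_le (hi1.add hi2) (Filter.Eventually.of_forall fun t => ?_)
        rw [norm_mul]
        have hq : ‖f t‖ * ‖P t‖ ≤ ‖P t‖ := mul_le_of_le_one_left (norm_nonneg _) (hf1 t)
        refine hq.trans ?_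
        have : s / 2 + ‖P t‖ ^ 2 / (2 * s) - ‖P t‖ = (s - ‖P t‖) ^ 2 / (2 * s) := by field_simp; ring
        have h3 : 0 ≤ (s - ‖P t‖) ^ 2 / (2 * s) := by positivity
        linarith
    _ = s * volume.real H / 2 + (∫ t in H, ‖P t‖ ^ 2) / (2 * s) := by
        rw [integral_add hi1 hi2, setIntegral_const, integral_div, smul_eq_mul]; ring
    _ ≤ s * volume.real H / 2 + (2 * π * S.card) / (2 * s) := by
        gcongr
        refine le_trans ?_ hb
        rw [intervalIntegral.integral_of_le (by positivity), integral_Ioc_eq_integral_Ioo]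
        exact setIntegral_mono_set hPi (Filter.Eventually.of_forall fun t => by positivity) hH.eventuallyLE
    _ = _ := by field_simp

def J (C : Finset ℝ) (r c : ℝ) : Set ℝ :=
  {x | x ∈ Ioo 0 (2 * π) ∧ c + r < x ∧ ∀ c' ∈ C, c < c' → x < c'}

def F (C : Finset ℝ) (r : ℝ) : Set ℝ := ⋃ c ∈ C, Icc c (c + r)

lemma J_eq (C : Finset ℝ) (r c : ℝ) : ∃ u v, 0 ≤ u ∧ v ≤ 2 * π ∧ J C r c = Ioo u v := by
  classical
  have hne : (insert (2 * π) (C.filter (c < ·))).Nonempty := Finset.insert_nonempty _ _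
  refine ⟨max 0 (c + r), (insert (2 * π) (C.filter (c < ·))).min' hne, le_max_left _ _,
    Finset.min'_le _ _ (Finset.mem_insert_self _ _), ?_⟩
  ext x
  simp only [J, mem_setOf_eq, mem_Ioo, max_lt_iff, Finset.lt_min'_iff, Finset.mem_insert,
    Finset.mem_filter, forall_eq_or_imp, and_imp]
  tauto

lemma F_meas (C : Finset ℝ) (r : ℝ) : MeasurableSet (F C r) :=
  Finset.measurableSet_biUnion _ fun _ _ => measurableSet_Icc

lemma F_vol (C : Finset ℝ) (r : ℝ) (hr : 0 ≤ r) : volume.real (Ioo 0 (2 * π) ∩ F C r) ≤ C.card * r := by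
  have h : volume (Ioo 0 (2 * π) ∩ F C r) ≤ ENNReal.ofReal (C.card * r) := by
    refine (measure_mono inter_subset_right).trans ?_
    refine (measure_biUnion_finset_le _ _).trans ?_
    simp [ENNReal.ofReal_mul]
  exact ENNReal.toReal_le_of_le_ofReal (by positivity) h

lemma J_union (C : Finset ℝ) (r : ℝ) (hr : 0 ≤ r) (c0 : ℝ) (h0 : c0 ∈ C) (h0' : c0 ≤ 0) :
    Ioo 0 (2 * π) \ F C r = ⋃ c ∈ C, J C r c := by
  classical
  ext x
  simp only [F, J, mem_diff, mem_iUnion, mem_setOf_eq, exists_prop, not_exists, not_and]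
  constructor
  · rintro ⟨hx, hxF⟩
    have hne : (C.filter (· ≤ x)).Nonempty := ⟨c0, Finset.mem_filter.2 ⟨h0, h0'.trans hx.1.le⟩⟩
    have hm := Finset.max'_mem _ hne
    rw [Finset.mem_filter] at hm
    refine ⟨_, hm.1, hx, ?_, ?_⟩
    · by_contra hcon
      exact hxF _ hm.1 ⟨hm.2, not_lt.1 hcon⟩
    · intro c' hc' hlt
      by_contra hcon
      have hmem : c' ∈ C.filter (· ≤ x) := Finset.mem_filter.2 ⟨hc', not_lt.1 hcon⟩
      exact absurd hlt (not_lt.2 (Finset.le_max' _ c' hmem))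
  · rintro ⟨c, hc, hx, h1, h2⟩
    refine ⟨hx, fun c' hc' hmem => ?_⟩
    rcases lt_or_ge c c' with h | h
    · exact absurd (h2 c' hc' h) (not_lt.2 hmem.1)
    · linarith [hmem.2]

lemma J_disj (C : Finset ℝ) (r : ℝ) (hr : 0 ≤ r) : (C : Set ℝ).PairwiseDisjoint (J C r) := by
  have key : ∀ c ∈ C, ∀ c' ∈ C, c < c' → Disjoint (J C r c) (J C r c') := by
    intro c hc c' hc' h
    rw [Set.disjoint_left]
    rintro x ⟨_, _, h2⟩ ⟨_, h3, _⟩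
    linarith [h2 c' hc' h]
  intro c hc c' hc' hne
  rcases lt_or_gt_of_ne hne with h | h
  · exact key c hc c' hc' h
  · exact (key c' hc' c hc h).symm

lemma total (C : Finset ℝ) (r : ℝ) (hr : 0 ≤ r) (c0 : ℝ) (h0 : c0 ∈ C) (h0' : c0 ≤ 0)
    (S : Finset ℤ) (K : ℕ) (hK : 0 < K) (hS : S.card ≤ K) (g : ℝ → ℝ)
    (hg : ∀ u v : ℝ, u < v → Ioo u v ⊆ Ioo 0 (2 * π) \ F C r → ∃ a b : ℝ, ∀ t ∈ Ioo u v, g t = a * t + b)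
    (hf : IntegrableOn (fun t => Complex.exp (Complex.I * (g t : ℂ))) (Ioo 0 (2 * π)))
    (s : ℝ) (hs : 0 < s) :
    ∑ k ∈ S, ‖∫ t in Ioo 0 (2 * π), Complex.exp (Complex.I * (g t : ℂ)) *
        Complex.exp (-Complex.I * (k : ℂ) * (t : ℂ))‖ ≤
      C.card * (16 + 4 * ((harmonic K : ℚ) : ℝ)) + (s * (C.card * r) / 2 + π * K / s) := by
  have hInt : ∀ k : ℤ, IntegrableOn (fun t => Complex.exp (Complex.I * (g t : ℂ)) *
      Complex.exp (-Complex.I * (k : ℂ) * (t : ℂ))) (Ioo 0 (2 * π)) := fun k =>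
    Integrable.mul_bdd (c := 1) hf (by fun_prop) (Filter.Eventually.of_forall fun t => (norm_ek k t).le)
  have hJsub : ∀ c ∈ C, J C r c ⊆ Ioo 0 (2 * π) \ F C r := by
    intro c hc
    rw [J_union C r hr c0 h0 h0']
    exact subset_biUnion_of_mem (u := fun c => J C r c) hc
  have hJm : ∀ c, MeasurableSet (J C r c) := by
    intro c
    obtain ⟨u, v, _, _, h⟩ := J_eq C r c
    rw [h]; exact measurableSet_Ioo
  have hsplit : ∀ k : ℤ, ‖∫ t in Ioo 0 (2 * π), Complex.exp (Complex.I * (g t : ℂ)) *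
        Complex.exp (-Complex.I * (k : ℂ) * (t : ℂ))‖ ≤
      ‖∫ t in Ioo 0 (2 * π) ∩ F C r, Complex.exp (Complex.I * (g t : ℂ)) *
        Complex.exp (-Complex.I * (k : ℂ) * (t : ℂ))‖ +
      ∑ c ∈ C, ‖∫ t in J C r c, Complex.exp (Complex.I * (g t : ℂ)) *
        Complex.exp (-Complex.I * (k : ℂ) * (t : ℂ))‖ := by
    intro k
    rw [← integral_inter_add_diff (F_meas C r) (hInt k)]
    refine (norm_add_le _ _).trans ?_
    gcongr
    rw [J_union C r hr c0 h0 h0', integral_biUnion_finset C (fun c _ => hJm c) (J_disj C r hr)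
      (fun c hc => (hInt k).mono_set ((hJsub c hc).trans diff_subset))]
    exact norm_sum_le _ _
  have hpiece : ∀ c ∈ C, ∑ k ∈ S, ‖∫ t in J C r c, Complex.exp (Complex.I * (g t : ℂ)) *
        Complex.exp (-Complex.I * (k : ℂ) * (t : ℂ))‖ ≤ 16 + 4 * ((harmonic K : ℚ) : ℝ) := by
    intro c hc
    have hsub := hJsub c hc
    obtain ⟨u, v, hu, hv, h⟩ := J_eq C r c
    rw [h] at hsub ⊢
    rcases lt_or_ge u v with huv | huv
    · obtain ⟨a, b, hab⟩ := hg u v huv hsub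
      exact sum_bound _ a (fun k => norm_nonneg _) (fun k => piece1 u v hu hv g k)
        (fun k => piece2 u v huv.le a b g k hab) S K hK hS
    · rw [Ioo_eq_empty (not_lt.2 huv)]
      have : (0:ℝ) ≤ ((harmonic K : ℚ) : ℝ) := by
        exact_mod_cast (harmonic_pos hK.ne').le
      simp; positivity
  have hbad := bad S (Ioo 0 (2 * π) ∩ F C r) (measurableSet_Ioo.inter (F_meas C r)) inter_subset_left _ hf
    (fun t => (norm_e (g t)).le) s hs
  have hvol := F_vol C r hr
  have hSr : (S.card : ℝ) ≤ K := by exact_mod_cast hS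
  calc _ ≤ ∑ k ∈ S, (‖∫ t in Ioo 0 (2 * π) ∩ F C r, Complex.exp (Complex.I * (g t : ℂ)) *
        Complex.exp (-Complex.I * (k : ℂ) * (t : ℂ))‖ +
      ∑ c ∈ C, ‖∫ t in J C r c, Complex.exp (Complex.I * (g t : ℂ)) *
        Complex.exp (-Complex.I * (k : ℂ) * (t : ℂ))‖) := Finset.sum_le_sum fun k _ => hsplit k
    _ ≤ (s * (C.card * r) / 2 + π * K / s) + C.card * (16 + 4 * ((harmonic K : ℚ) : ℝ)) := by
        rw [Finset.sum_add_distrib]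
        refine add_le_add (hbad.trans ?_) ?_
        · have := Real.pi_pos
          gcongr
        · rw [Finset.sum_comm]
          refine (Finset.sum_le_sum hpiece).trans ?_
          rw [Finset.sum_const, nsmul_eq_mul]
    _ = _ := add_comm _ _

lemma alg2 (l w L d : ℝ) (hw : 0 < w) : l * w / L * (3 / w * d) / 2 = 3 / 2 * (l / L * d) := by
  field_simp

lemma alg3 (l w L : ℝ) (hl : 0 < l) : 4 * (5 * l) / (l * w / L) = 20 * (L / w) := by
  field_simp
  ring

end S8

set_option maxHeartbeats 1000000


/-- Lemma 3: for g linear on each interval complementary to the Cantor-type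
set E, Σ_{|k|≤2λ} |(e^{ig})^∧(k)| ≤ c·Θ(λ), where Θ(y) = (y/log y)·χ^{-1}((log y)²/y). -/
theorem statement8
    -- ω is a modulus of continuity: continuous non-decreasing on [0,∞), ω(0)=0, ω(δ)>0 for δ>0,
    -- with χ(δ) = δ·ω(δ) strictly increasing and unbounded, and χinv its inverse.
    (ω : ℝ → ℝ)
    (hω_cont : ContinuousOn ω (Ici 0)) (hω_mono : MonotoneOn ω (Ici 0))
    (hω_zero : ω 0 = 0) (hω_pos : ∀ δ : ℝ, 0 < δ → 0 < ω δ)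
    (hχ_mono : StrictMonoOn (fun δ => δ * ω δ) (Ici 0))
    (hχ_unbdd : ∀ y : ℝ, ∃ δ : ℝ, 0 ≤ δ ∧ y < δ * ω δ)
    (χinv : ℝ → ℝ)
    (hχinv_left : ∀ δ : ℝ, 0 ≤ δ → χinv (δ * ω δ) = δ)
    (hχinv_right : ∀ y : ℝ, 0 ≤ y → 0 ≤ χinv y ∧ χinv y * ω (χinv y) = y)
    (hω_2pi : ω (2 * Real.pi) = 1)
    (hω_doubling : ∀ δ : ℝ, 0 < δ → δ ≤ 2 * Real.pi → ω (2 * δ) < 2 * ω δ)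
    -- the lengths ρ_j, with ω(ρ_j) = 2^{-j}, ρ_0 = 2π
    (ρ : ℕ → ℝ) (hρ_pos : ∀ j : ℕ, 0 < ρ j) (hρ0 : ρ 0 = 2 * Real.pi)
    (hρ : ∀ j : ℕ, ω (ρ j) = (2 : ℝ) ^ (-(j : ℝ)))
    -- the closed set E, covered for each j by 2^j closed intervals of length ρ_j
    (E : Set ℝ) (hE_sub : E ⊆ Icc 0 (2 * Real.pi)) (hE_closed : IsClosed E)
    (hE_cover : ∀ j : ℕ, ∃ centers : Fin (2 ^ j) → ℝ,
      E ⊆ ⋃ i : Fin (2 ^ j), Icc (centers i) (centers i + ρ j)) :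
    ∃ c : ℝ, 0 < c ∧
      ∀ lam : ℝ, 2 ≤ lam →
        ∀ g : ℝ → ℝ,
          -- g is linear on each interval complementary to E in [0,2π]
          (∀ u v : ℝ, u < v → Ioo u v ⊆ Icc 0 (2 * Real.pi) \ E →
            ∃ a b : ℝ, ∀ t ∈ Ioo u v, g t = a * t + b) →
          ∑ k ∈ Finset.Icc (-⌊2 * lam⌋) ⌊2 * lam⌋,
            ‖fourierCoef (fun t => Complex.exp (Complex.I * (g t : ℂ))) k‖
            ≤ c * ((lam / Real.log lam) * χinv ((Real.log lam) ^ 2 / lam)) := by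
  classical
  have hpi := Real.pi_pos
  refine ⟨1000, by norm_num, fun lam hlam g hg => ?_⟩
  set L := Real.log lam with hL
  have hlam0 : 0 < lam := by linarith
  have hL2 : 1 / 2 ≤ L := by
    have h1 := Real.log_two_gt_d9
    have h2 : Real.log 2 ≤ L := Real.log_le_log (by norm_num) hlam
    linarith
  have hL0 : 0 < L := by linarith
  set y := L ^ 2 / lam with hy
  have hy0 : 0 < y := by positivity
  obtain ⟨hδ0, hδ⟩ := hχinv_right y hy0.le
  set δ := χinv y with hδdef
  have hδpos : 0 < δ := by
    rcases hδ0.eq_or_lt with h | h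
    · rw [← h] at hδ; simp at hδ; linarith
    · exact h
  have hw0 := hω_pos δ hδpos
  -- y ≤ 2 π
  have hy1 : y ≤ 2 * π := by
    have h1 : L ≤ 2 * (Real.sqrt lam - 1) := by
      have := Real.log_le_sub_one_of_pos (Real.sqrt_pos.2 hlam0)
      rw [Real.log_sqrt hlam0.le] at this
      linarith
    have h2 : L ^ 2 ≤ 4 * lam := by
      have h3 := Real.sq_sqrt hlam0.le
      have h4 := Real.sqrt_nonneg lam
      nlinarith
    have h3 : y ≤ 4 := by
      rw [hy, div_le_iff₀ hlam0]; exact h2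
    linarith [Real.pi_gt_three]
  have hw1 : ω δ ≤ 1 := by
    rw [← hω_2pi]
    apply hω_mono (mem_Ici.2 hδ0) (mem_Ici.2 (by positivity))
    by_contra hcon
    have := hχ_mono (mem_Ici.2 (by positivity)) (mem_Ici.2 hδ0) (not_le.1 hcon)
    simp only [hω_2pi, hδ] at this
    linarith
  set Θ := lam / L * δ with hΘ
  have hΘ1 : L / ω δ = Θ := by
    have hδ' : δ * ω δ * lam = L ^ 2 := by rw [hδ, hy]; field_simp
    rw [hΘ, div_mul_eq_mul_div, div_eq_div_iff hw0.ne' hL0.ne']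
    linarith
  have hΘ0 : 0 < Θ := by positivity
  set f : ℝ → ℂ := fun t => Complex.exp (Complex.I * (g t : ℂ)) with hf
  have hcoef : ∀ k, fourierCoef f k = (1 / (2 * (Real.pi : ℂ))) *
      ∫ t in Ioo 0 (2 * π), f t * Complex.exp (-Complex.I * (k : ℂ) * (t : ℂ)) := by
    intro k
    rw [fourierCoef, intervalIntegral.integral_of_le (by positivity), integral_Ioc_eq_integral_Ioo]
  have hnorm : ∀ k, ‖fourierCoef f k‖ ≤
      ‖∫ t in Ioo 0 (2 * π), f t * Complex.exp (-Complex.I * (k : ℂ) * (t : ℂ))‖ := by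
    intro k
    rw [hcoef, norm_mul]
    apply mul_le_of_le_one_left (norm_nonneg _)
    have : ‖(1 / (2 * (π : ℂ)))‖ = 1 / (2 * π) := by
      simp [abs_of_pos hpi]
    rw [this, div_le_one (by positivity)]
    linarith [Real.pi_gt_three]
  refine (Finset.sum_le_sum fun k _ => hnorm k).trans ?_
  by_cases hInt : IntegrableOn f (Ioo 0 (2 * π))
  swap
  · have : ∀ k : ℤ, ∫ t in Ioo 0 (2 * π), f t * Complex.exp (-Complex.I * (k : ℂ) * (t : ℂ)) = 0 := by
      intro k
      apply integral_undef
      intro hcon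
      apply hInt
      have h2 := Integrable.mul_bdd (c := 1) (g := fun t : ℝ => Complex.exp (-Complex.I * ((-k : ℤ) : ℂ) * (t : ℂ)))
        hcon (by fun_prop) (Filter.Eventually.of_forall fun t => (S8.norm_ek (-k) t).le)
      refine h2.congr (Filter.Eventually.of_forall fun t => ?_)
      simp only
      rw [mul_assoc, ← Complex.exp_add]
      have : -Complex.I * (k : ℂ) * (t : ℂ) + -Complex.I * ((-k : ℤ) : ℂ) * (t : ℂ) = 0 := by
        push_cast; ring
      rw [this, Complex.exp_zero, mul_one]
    simp only [this, norm_zero, Finset.sum_const_zero]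
    positivity
  -- choose j
  have hex : ∃ j : ℕ, ((1 : ℝ) / 2) ^ j < ω δ := exists_pow_lt_of_lt_one hw0 (by norm_num)
  have hjs := Nat.find_spec hex
  have hjm := fun m => Nat.find_min hex (m := m)
  set j := Nat.find hex with hj
  have hρj : ω (ρ j) = (1 / 2) ^ j := by
    rw [hρ, Real.rpow_neg (by norm_num), Real.rpow_natCast]; simp
  have hρδ : ρ j ≤ δ := by
    by_contra hcon
    have := hω_mono (mem_Ici.2 hδ0) (mem_Ici.2 (hρ_pos j).le) (not_le.1 hcon).le
    linarith
  have hN : (2 : ℝ) ^ j ≤ 2 / ω δ := by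
    rw [le_div_iff₀ hw0]
    rcases Nat.eq_zero_or_pos j with h | h
    · rw [h]; linarith
    · have h1 := not_lt.1 (hjm (j - 1) (by omega))
      obtain ⟨m, hm⟩ : ∃ m, j = m + 1 := ⟨j - 1, by omega⟩
      rw [hm] at h1 ⊢
      simp only [Nat.add_sub_cancel] at h1
      calc (2:ℝ) ^ (m + 1) * ω δ ≤ 2 ^ (m + 1) * (1 / 2) ^ m := by gcongr
        _ = 2 := by rw [pow_succ, mul_right_comm, ← mul_pow]; norm_num
  obtain ⟨cen, hcen⟩ := hE_cover j
  set C : Finset ℝ := insert (-1) (Finset.univ.image cen) with hC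
  have hCcard : (C.card : ℝ) ≤ 3 / ω δ := by
    have h1 : C.card ≤ 2 ^ j + 1 := by
      refine (Finset.card_insert_le _ _).trans ?_
      gcongr
      exact Finset.card_image_le.trans (by simp)
    have h2 : (C.card : ℝ) ≤ 2 ^ j + 1 := by exact_mod_cast h1
    have h3 : 1 ≤ 1 / ω δ := by rw [le_div_iff₀ hw0]; linarith
    have h4 : 3 / ω δ = 2 / ω δ + 1 / ω δ := by ring
    linarith
  have hEF : E ⊆ S8.F C (ρ j) := by
    intro x hx
    obtain ⟨i, hi⟩ := mem_iUnion.1 (hcen hx)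
    exact mem_biUnion (x := cen i) (by simp [hC]) hi
  set S := Finset.Icc (-⌊2 * lam⌋) ⌊2 * lam⌋ with hS
  have hfl0 : 0 ≤ ⌊2 * lam⌋ := Int.floor_nonneg.2 (by positivity)
  have hcard : (S.card : ℝ) ≤ 5 * lam := by
    have h1 : (S.card : ℤ) = 2 * ⌊2 * lam⌋ + 1 := by
      rw [hS, Int.card_Icc]; omega
    have h2 : (S.card : ℝ) = 2 * (⌊2 * lam⌋ : ℝ) + 1 := by exact_mod_cast h1
    have := Int.floor_le (2 * lam)
    linarith
  have hcard0 : 0 < S.card := Finset.card_pos.2 ⟨0, by simp [hS, hfl0]⟩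
  have hharm : ((harmonic S.card : ℚ) : ℝ) ≤ 6 * L := by
    refine (harmonic_le_one_add_log _).trans ?_
    have h1 : Real.log S.card ≤ Real.log (lam ^ 4) := by
      apply Real.log_le_log (by exact_mod_cast hcard0)
      refine hcard.trans ?_
      have : (2:ℝ) ^ 3 ≤ lam ^ 3 := by gcongr
      nlinarith
    rw [Real.log_pow] at h1
    push_cast at h1
    linarith
  set s := lam * ω δ / L with hs
  have hs0 : 0 < s := by positivity
  have htot := S8.total C (ρ j) (hρ_pos j).le (-1) (by simp [hC]) (by norm_num) S S.card hcard0 le_rfl g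
    (fun u v huv hsub => hg u v huv fun x hx => ⟨Ioo_subset_Icc_self (hsub hx).1, fun hxE => (hsub hx).2 (hEF hxE)⟩)
    hInt s hs0
  refine htot.trans ?_
  have b1 : C.card * (16 + 4 * ((harmonic S.card : ℚ) : ℝ)) ≤ 168 * Θ := by
    calc _ ≤ 3 / ω δ * (56 * L) := by
          apply mul_le_mul hCcard (by linarith) _ (by positivity)
          have : (0:ℝ) ≤ ((harmonic S.card : ℚ) : ℝ) := by exact_mod_cast (harmonic_pos hcard0.ne').le
          positivity
      _ = 168 * (L / ω δ) := by ring
      _ = _ := by rw [hΘ1]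
  have b2 : s * (C.card * ρ j) / 2 ≤ 2 * Θ := by
    calc _ ≤ s * (3 / ω δ * δ) / 2 := by
          have := (hρ_pos j).le
          gcongr
      _ = 3 / 2 * Θ := S8.alg2 lam (ω δ) L δ hw0
      _ ≤ _ := by linarith
  have b3 : π * S.card / s ≤ 20 * Θ := by
    calc _ ≤ 4 * (5 * lam) / s :=
          div_le_div_of_nonneg_right (mul_le_mul (by linarith [Real.pi_lt_d2]) hcard
            (Nat.cast_nonneg _) (by norm_num)) hs0.le
      _ = 20 * (L / ω δ) := S8.alg3 lam (ω δ) L hlam0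
      _ = _ := by rw [hΘ1]
  linarith
end

section
/- Let f be a real function on [0,2π] and I ⊆ [0,2π] an interval such that f is C¹ on I, the derivative f′ is monotone on I, and |f′(t)| ≤ 1 for all t ∈ I. Let λ > 0. Then for every integer k with |k| ≥ 2λ one has |(1_I · e^{iλf})^∧(k)| ≤ 2/|k|. -/
open MeasureTheory Real Set
open scoped ENNReal

lemma aux_ordConn (φ ψ : ℝ → ℝ) (hφ : ∀ t, HasDerivAt φ (ψ t) t) (hψ : Continuous ψ)
    (T : Set ℝ) (hT : T.OrdConnected) (hb : BddBelow T) (ha : BddAbove T) :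
    ‖∫ t in T, (ψ t : ℂ) * Complex.exp (Complex.I * (φ t : ℂ))‖ ≤ 2 := by
  rcases T.eq_empty_or_nonempty with rfl | hne
  · simp
  have hle : sInf T ≤ sSup T := csInf_le_csSup hne hb ha
  have h1 : T ⊆ Icc (sInf T) (sSup T) := subset_Icc_csInf_csSup hb ha
  have h2 : Ioo (sInf T) (sSup T) ⊆ T :=
    fun x hx => by
      obtain ⟨u, hu, hux⟩ := exists_lt_of_csInf_lt hne hx.1
      obtain ⟨v, hv, hxv⟩ := exists_lt_of_lt_csSup hne hx.2
      exact hT.out hu hv ⟨hux.le, hxv.le⟩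
  have hae : T =ᵐ[volume] Ioc (sInf T) (sSup T) := by
    have e1 : Ioo (sInf T) (sSup T) =ᵐ[volume] Icc (sInf T) (sSup T) := Ioo_ae_eq_Icc
    have e2 : Ioo (sInf T) (sSup T) =ᵐ[volume] Ioc (sInf T) (sSup T) := Ioo_ae_eq_Ioc
    refine Filter.EventuallyEq.trans ?_ e2
    exact Filter.EventuallyLE.antisymm
      ((LE.le.eventuallyLE h1).trans e1.symm.le) (LE.le.eventuallyLE h2)
  have hcφ : Continuous φ := continuous_iff_continuousAt.2 fun t => (hφ t).continuousAt
  rw [setIntegral_congr_set hae, ← intervalIntegral.integral_of_le hle]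
  have hd : ∀ t, HasDerivAt (fun t => -Complex.I * Complex.exp (Complex.I * (φ t : ℂ)))
      ((ψ t : ℂ) * Complex.exp (Complex.I * (φ t : ℂ))) t := by
    intro t
    have := ((((hφ t).ofReal_comp).const_mul Complex.I).cexp).const_mul (-Complex.I)
    refine this.congr_deriv ?_
    linear_combination (-(ψ t : ℂ) * Complex.exp (Complex.I * (φ t : ℂ))) * Complex.I_mul_I
  rw [intervalIntegral.integral_eq_sub_of_hasDerivAt (fun t _ => hd t)
    (Continuous.intervalIntegrable (by fun_prop) _ _)]
  refine (norm_sub_le _ _).trans ?_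
  simp [Complex.norm_exp]
  norm_num

lemma aux_vdc (φ ψ : ℝ → ℝ) (hφ : ∀ t, HasDerivAt φ (ψ t) t) (hψ : Continuous ψ)
    (hm : Monotone ψ ∨ Antitone ψ) (μ : ℝ) (hμ : 0 < μ) (hge : ∀ t, μ ≤ ψ t) (a b : ℝ) :
    ‖∫ t in Ioc a b, Complex.exp (Complex.I * (φ t : ℂ))‖ ≤ 2 / μ := by
  have hcφ : Continuous φ := continuous_iff_continuousAt.2 fun t => (hφ t).continuousAt
  have hpos : ∀ t, 0 < ψ t := fun t => hμ.trans_le (hge t)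
  set D : ℝ → ℂ := fun t => (ψ t : ℂ) * Complex.exp (Complex.I * (φ t : ℂ)) with hD
  have hDc : Continuous D := by fun_prop
  set g : ℝ → ℝ := fun t => (ψ t)⁻¹ with hg
  have hgc : Continuous g := hψ.inv₀ fun t => (hpos t).ne'
  have hgle : ∀ t, g t ≤ μ⁻¹ := fun t => inv_anti₀ hμ (hge t)
  have hgpos : ∀ t, 0 < g t := fun t => inv_pos.2 (hpos t)
  let S : Set (ℝ × ℝ) := {p | p.2 < g p.1}
  have hS : MeasurableSet S := measurableSet_lt measurable_snd (hgc.measurable.comp measurable_fst)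
  let F : ℝ → ℝ → ℂ := fun t s => S.indicator (fun p => D p.1) (t, s)
  have h1 : ∀ t, Complex.exp (Complex.I * (φ t : ℂ)) = ∫ s in Ioc 0 μ⁻¹, F t s := by
    intro t
    have : ∀ s, F t s = (Iio (g t)).indicator (fun _ => D t) s := by
      intro s; simp only [F, S, Set.indicator, mem_ofPred_eq, mem_Iio]
    simp_rw [this]
    rw [setIntegral_indicator measurableSet_Iio]
    have : Ioc 0 μ⁻¹ ∩ Iio (g t) = Ioo 0 (g t) := by
      ext s; simp only [mem_inter_iff, mem_Ioc, mem_Iio, mem_Ioo]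
      constructor
      · rintro ⟨⟨h, _⟩, h'⟩; exact ⟨h, h'⟩
      · rintro ⟨h, h'⟩; exact ⟨⟨h, h'.le.trans (hgle t)⟩, h'⟩
    rw [this, setIntegral_const, Real.volume_real_Ioo_of_le (hgpos t).le]
    simp only [sub_zero, hD, hg, Complex.real_smul]
    have : (ψ t : ℂ) ≠ 0 := by exact_mod_cast (hpos t).ne'
    push_cast
    field_simp
  simp_rw [h1]
  rw [integral_integral_swap]
  · have := norm_setIntegral_le_of_norm_le_const (μ := volume) (s := Ioc (0:ℝ) μ⁻¹) (C := 2)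
      (f := fun s => ∫ t in Ioc a b, F t s) (by simp) ?_
    · refine this.trans ?_
      rw [Real.volume_real_Ioc_of_le (inv_pos.2 hμ).le, sub_zero, div_eq_mul_inv]
    · intro s _
      have : ∀ t, F t s = ({t | s < g t}).indicator D t := by
        intro t; simp only [F, S, Set.indicator, mem_ofPred_eq]
      simp_rw [this]
      rw [setIntegral_indicator (measurableSet_lt measurable_const hgc.measurable)]
      refine aux_ordConn φ ψ hφ hψ _ ?_ (bddBelow_Ioc.mono inter_subset_left)
        (bddAbove_Ioc.mono inter_subset_left)
      refine ordConnected_Ioc.inter ?_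
      refine ⟨fun x hx y hy z hz => ?_⟩
      rcases hm with hm | hm
      · exact lt_of_lt_of_le hy (inv_anti₀ (hpos z) (hm hz.2))
      · exact lt_of_lt_of_le hx (inv_anti₀ (hpos z) (hm hz.1))
  · refine Integrable.indicator ?_ hS
    have : Integrable D (volume.restrict (Ioc a b)) :=
      (hDc.integrableOn_Icc (a := a) (b := b)).mono_set Ioc_subset_Icc_self
    exact this.comp_fst _

lemma aux_vdc_abs (φ ψ : ℝ → ℝ) (hφ : ∀ t, HasDerivAt φ (ψ t) t) (hψ : Continuous ψ)
    (hm : Monotone ψ ∨ Antitone ψ) (μ : ℝ) (hμ : 0 < μ)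
    (hge : (∀ t, μ ≤ ψ t) ∨ (∀ t, μ ≤ - ψ t)) (a b : ℝ) :
    ‖∫ t in Ioc a b, Complex.exp (Complex.I * (φ t : ℂ))‖ ≤ 2 / μ := by
  rcases hge with h | h
  · exact aux_vdc φ ψ hφ hψ hm μ hμ h a b
  · have := aux_vdc (fun t => - φ t) (fun t => - ψ t) (fun t => (hφ t).neg) hψ.neg
      (hm.symm.imp (fun h => h.neg) (fun h => h.neg)) μ hμ h a b
    rw [← Complex.norm_conj, ← integral_conj]
    have e : ∀ t, (starRingEnd ℂ) (Complex.exp (Complex.I * (φ t : ℂ)))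
        = Complex.exp (Complex.I * ((-φ t : ℝ) : ℂ)) := by
      intro t
      rw [← Complex.exp_conj]
      simp
    simp_rw [e]
    exact this

/-- Lemma 4, van der Corput consequence: if f is C¹ on an interval
I = [a,b] ⊆ [0,2π] with f′ monotone and |f′| ≤ 1 on I, then for λ > 0 and |k| ≥ 2λ,
|(1_I e^{iλf})^∧(k)| ≤ 2/|k|. -/
theorem statement9
    (f f' : ℝ → ℝ) (a b : ℝ) (hab : a ≤ b)
    (hI : Icc a b ⊆ Icc 0 (2 * Real.pi))
    (hderiv : ∀ t ∈ Icc a b, HasDerivWithinAt f (f' t) (Icc a b) t)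
    (hcont : ContinuousOn f' (Icc a b))
    (hmono : MonotoneOn f' (Icc a b) ∨ AntitoneOn f' (Icc a b))
    (hbound : ∀ t ∈ Icc a b, |f' t| ≤ 1)
    (lam : ℝ) (hlam : 0 < lam) :
    ∀ k : ℤ, 2 * lam ≤ |(k : ℝ)| →
      ‖fourierCoef
        (Set.indicator (Icc a b)
          (fun t => Complex.exp (Complex.I * (lam : ℂ) * (f t : ℂ)))) k‖
        ≤ 2 / |(k : ℝ)| := by
  intro k hk
  have hk0 : 0 < |(k:ℝ)| := by linarith
  let G : ℝ → ℝ := fun t => f' (projIcc a b hab t)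
  have hGc : Continuous G := by
    have : Continuous (fun x : Icc a b => f' x) := continuousOn_iff_continuous_domRestrict.1 hcont
    exact this.comp continuous_projIcc
  have hGeq : ∀ t ∈ Icc a b, G t = f' t := fun t ht => by
    simp only [G, projIcc_of_mem hab ht]
  have hG1 : ∀ t, |G t| ≤ 1 := fun t => hbound _ (projIcc a b hab t).2
  have hGm : Monotone G ∨ Antitone G := by
    rcases hmono with h | h
    · exact Or.inl fun x y hxy => h (projIcc a b hab x).2 (projIcc a b hab y).2
        (monotone_projIcc hab hxy)
    · exact Or.inr fun x y hxy => h (projIcc a b hab x).2 (projIcc a b hab y).2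
        (monotone_projIcc hab hxy)
  have hfeq : ∀ t ∈ Icc a b, f t = f a + ∫ u in a..t, G u := by
    intro t ht
    rw [intervalIntegral.integral_eq_sub_of_hasDerivAt_of_le (f := f) ht.1 ?_ ?_
      (hGc.intervalIntegrable _ _)]
    · ring
    · exact fun x hx => ((hderiv x ⟨hx.1, hx.2.trans ht.2⟩).continuousWithinAt).mono
        (Icc_subset_Icc_right ht.2)
    · intro x hx
      have hx' : x ∈ Ioo a b := ⟨hx.1, hx.2.trans_le ht.2⟩
      rw [hGeq x (Ioo_subset_Icc_self hx')]
      exact (hderiv x (Ioo_subset_Icc_self hx')).hasDerivAt (Icc_mem_nhds hx'.1 hx'.2)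
  let φ : ℝ → ℝ := fun t => lam * (f a + ∫ u in a..t, G u) - k * t
  let ψ : ℝ → ℝ := fun t => lam * G t - k
  have hφ : ∀ t, HasDerivAt φ (ψ t) t := by
    intro t
    have h1 : HasDerivAt (fun t => ∫ u in a..t, G u) (G t) t :=
      (hGc.integral_hasStrictDerivAt a t).hasDerivAt
    have := ((h1.const_add (f a)).const_mul lam).sub ((hasDerivAt_id t).const_mul (k:ℝ))
    exact this.congr_deriv (by simp only [ψ, mul_one])
  have hψm : Monotone ψ ∨ Antitone ψ := by
    rcases hGm with h | h
    · exact Or.inl fun x y hxy => sub_le_sub_right (mul_le_mul_of_nonneg_left (h hxy) hlam.le) _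
    · exact Or.inr fun x y hxy => sub_le_sub_right (mul_le_mul_of_nonneg_left (h hxy) hlam.le) _
  have hge : (∀ t, |(k:ℝ)| / 2 ≤ ψ t) ∨ (∀ t, |(k:ℝ)| / 2 ≤ - ψ t) := by
    have hb : ∀ t, -lam ≤ lam * G t ∧ lam * G t ≤ lam := fun t => by
      have := abs_le.1 (hG1 t)
      constructor <;> nlinarith
    rcases le_total 0 (k:ℝ) with h | h
    · right; intro t
      rw [abs_of_nonneg h] at *
      have := (hb t).2
      simp only [ψ]; linarith
    · left; intro t
      rw [abs_of_nonpos h] at *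
      have := (hb t).1
      simp only [ψ]; linarith
  have key := aux_vdc_abs φ ψ hφ (by fun_prop) hψm (|(k:ℝ)| / 2) (by linarith) hge a b
  have hint : (∫ t in (0:ℝ)..(2 * Real.pi), (Set.indicator (Icc a b)
          (fun t => Complex.exp (Complex.I * (lam : ℂ) * (f t : ℂ)))) t *
            Complex.exp (-Complex.I * (k : ℂ) * (t : ℂ)))
      = ∫ t in Ioc a b, Complex.exp (Complex.I * (φ t : ℂ)) := by
    rw [intervalIntegral.integral_of_le (by positivity), ← integral_Icc_eq_integral_Ioc,
      ← integral_Icc_eq_integral_Ioc]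
    have e : ∀ t, (Set.indicator (Icc a b)
          (fun t => Complex.exp (Complex.I * (lam : ℂ) * (f t : ℂ)))) t *
            Complex.exp (-Complex.I * (k : ℂ) * (t : ℂ)) = (Icc a b).indicator
          (fun t => Complex.exp (Complex.I * (lam : ℂ) * (f t : ℂ)) *
            Complex.exp (-Complex.I * (k : ℂ) * (t : ℂ))) t := by
      intro t
      by_cases ht : t ∈ Icc a b
      · rw [indicator_of_mem ht, indicator_of_mem ht]
      · rw [indicator_of_notMem ht, indicator_of_notMem ht, zero_mul]
    simp_rw [e]
    rw [setIntegral_indicator measurableSet_Icc, inter_eq_right.2 hI]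
    refine setIntegral_congr_fun measurableSet_Icc fun t ht => ?_
    simp only [φ]
    rw [← hfeq t ht, ← Complex.exp_add]
    congr 1
    push_cast
    ring
  rw [fourierCoef, hint, norm_mul]
  have hpi : ‖(1 / (2 * (Real.pi : ℂ)))‖ ≤ 1 / 2 := by
    rw [norm_div, norm_mul, Complex.norm_real, Real.norm_of_nonneg Real.pi_pos.le]
    simp only [norm_one, Complex.norm_ofNat]
    apply one_div_le_one_div_of_le (by norm_num)
    nlinarith [Real.pi_gt_three]
  calc _ ≤ 1 / 2 * (2 / (|(k:ℝ)| / 2)) := mul_le_mul hpi key (norm_nonneg _) (by norm_num)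
    _ = 2 / |(k:ℝ)| := by field_simp
end
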